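/- arXiv:0804.3032 — 2 statements merged into one kernel-verified Lean document; each statement's English description precedes it below -/
import Mathlib

section
/- Let β > 0. There exists a constant K > 0 depending only on β such that for every possible forest S with vertices v_{s_1},…,v_{s_k} (s_1 < … < s_k) and every integer t ≥ s_k, the probability under the Móri measure (on parent sequences of length t) that S is a subgraph of G^t_{1,β} equals β/(d^in_S(v_1)+β) · ∏_{v_i ∈ V^−(S)} Γ(1+d^in_S(v_i)+β)/Γ(1+β) · ∏_{(v_i,v_j) ∈ E(S), i>j} 1/((2+β)(i^{1+β} j)^{1/(2+β)}) · e^θ for some real θ with |θ| ≤ K · Σ_{j=2}^{k} c_S(s_j)²/(j−1). -/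
open Finset

/-- A parent sequence of length `N`: for each `t ∈ {2,…,N}` an index `f t ∈ {1,…,t-1}`. -/
def ParentSeq (N : ℕ) : Type :=
  ∀ t : Set.Icc 2 N, Set.Icc 1 ((t : ℕ) - 1)

noncomputable instance (N : ℕ) : Fintype (ParentSeq N) := by
  unfold ParentSeq
  classical
  infer_instance

/-- The value of a parent sequence at `j` (junk value `0` outside `{2,…,N}`). -/
def pval {N : ℕ} (f : ParentSeq N) (j : ℕ) : ℕ :=
  if h : 2 ≤ j ∧ j ≤ N then (f ⟨j, Set.mem_Icc.mpr h⟩ : ℕ) else 0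

/-- The degree `d_t(v_i)` of vertex `i` at time `t` in the tree determined by `f`. -/
def deg {N : ℕ} (f : ParentSeq N) (t i : ℕ) : ℕ :=
  ((Finset.Icc 2 t).filter (fun j => pval f j = i)).card + (if 2 ≤ i then 1 else 0)

/-- The Móri probability of the parent sequence `f`. -/
noncomputable def moriP {N : ℕ} (β : ℝ) (f : ParentSeq N) : ℝ :=
  ∏ t ∈ Finset.Icc 2 N, ((deg f (t - 1) (pval f t) : ℝ) + β) / ((2 + β) * ((t : ℝ) - 1) - 2)

/-- Expectation of `X` under the Móri measure on parent sequences of length `N`. -/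
noncomputable def moriE (N : ℕ) (β : ℝ) (X : ParentSeq N → ℝ) : ℝ :=
  ∑ f : ParentSeq N, moriP β f * X f

open Classical in
/-- Probability of an event under the Móri measure on parent sequences of length `N`. -/
noncomputable def moriPr (N : ℕ) (β : ℝ) (p : ParentSeq N → Prop) : ℝ :=
  ∑ f : ParentSeq N, if p f then moriP β f else 0

/-- The index of the merged vertex containing tree vertex `t` when merging in blocks of `m`. -/
def blk (m t : ℕ) : ℕ := (t - 1) / m + 1

/-- The number `m(a,b)` of edges joining `u_a` and `u_b` in the Móri graph `G^n_{m,β}`. -/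
def mult (n m : ℕ) (f : ParentSeq (n * m)) (a b : ℕ) : ℕ :=
  ((Finset.Icc 2 (n * m)).filter (fun t =>
    (blk m t = a ∧ blk m (pval f t) = b) ∨ (blk m t = b ∧ blk m (pval f t) = a))).card

/-- The degree `d(u_i)` of the merged vertex `u_i` in the Móri graph `G^n_{m,β}`
(a loop contributes `2`). -/
def degU (n m : ℕ) (f : ParentSeq (n * m)) (i : ℕ) : ℕ :=
  ((Finset.Icc 2 (n * m)).filter (fun t => blk m t = i)).card +
  ((Finset.Icc 2 (n * m)).filter (fun t => blk m (pval f t) = i)).card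
/-- A possible forest: a finite set of directed edges `(i, j)` with `1 ≤ j < i`,
each vertex having out-degree at most one (so vertex `1` has out-degree zero, and
there are no isolated vertices since the vertex set consists of endpoints of edges). -/
structure PossibleForest where
  E : Finset (ℕ × ℕ)
  one_le : ∀ e ∈ E, 1 ≤ e.2
  snd_lt_fst : ∀ e ∈ E, e.2 < e.1
  outdeg_le_one : ∀ e ∈ E, ∀ e' ∈ E, e.1 = e'.1 → e = e'

/-- The vertex set of a possible forest. -/
def PossibleForest.V (S : PossibleForest) : Finset ℕ :=
  S.E.image Prod.fst ∪ S.E.image Prod.snd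

/-- The in-degree `d^in_S(v_i)` of vertex `i` in `S` (zero if `i` is not a vertex of `S`). -/
def PossibleForest.din (S : PossibleForest) (i : ℕ) : ℕ :=
  (S.E.filter (fun e => e.2 = i)).card

/-- `V^-(S)`: the vertices of `S` with positive in-degree. -/
def PossibleForest.Vminus (S : PossibleForest) : Finset ℕ := S.E.image Prod.snd

/-- `V^+(S)`: the vertices of `S` with out-degree one. -/
def PossibleForest.Vplus (S : PossibleForest) : Finset ℕ := S.E.image Prod.fst

/-- `c_S(i)`: the number of edges `(v_a, v_b)` of `S` with `a ≥ i > b`. -/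
def PossibleForest.cS (S : PossibleForest) (i : ℕ) : ℕ :=
  (S.E.filter (fun e => i ≤ e.1 ∧ e.2 < i)).card

open Classical in
/-- The probability, under the Móri measure on parent sequences of length `t`,
that the possible forest `S` is a subgraph of `G^t_{1,β}`. -/
noncomputable def subProb (β : ℝ) (t : ℕ) (S : PossibleForest) : ℝ :=
  ∑ f : ParentSeq t, if ∀ e ∈ S.E, pval f e.1 = e.2 then moriP β f else 0

/-!
Reveal the parents one vertex at a time and follow, conditionally on the past, the probability that
the tree will contain `S`. Up to a normalisation this is the potential
`∏ k, (deg v_k + β) (deg v_k + β + 1) ⋯ (deg v_k + β + r_k - 1)` on the event that all the edges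
of `S` seen so far are present, where `r_k` counts the edges of `S` into `v_k` still to come. One
time step multiplies its expectation by an explicit factor: `1 / W_a` if `v_a` has a parent in `S`
and `1 + c_S(a) / W_a` otherwise, `W_a` being the total weight that `v_a` chooses from. Hence the
probability of `S` is an exact product over time.

Since `(i / j) ^ γ = ∏ a ∈ (j, i], (a / (a - 1)) ^ γ`, the edge weights of the closed form are also
a product over time, and the two products are compared factor by factor. The logarithms of the
factors differ by `O(c_S(a) ^ 2 / a)` when `v_a` has a parent in `S` and by
`O(c_S(a) ^ 2 / (a (a - 1)))` otherwise. As `c_S` is constant between consecutive vertices of `S`,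
the latter terms telescope over each gap.
-/

/-! ### The recursive structure of the Móri measure -/

/-- The total weight `∑ i < t, (d_{t-1}(v_i) + β)` of the vertices among which `v_t` chooses its
parent. -/
noncomputable def moriTotalWeight (β : ℝ) (t : ℕ) : ℝ :=
  (2 + β) * ((t : ℝ) - 1) - 2

theorem mul_sub_one_le_moriTotalWeight {t : ℕ} (β : ℝ) (ht : 2 ≤ t) :
    β * ((t : ℝ) - 1) ≤ moriTotalWeight β t := by
  have : (2 : ℝ) ≤ t := mod_cast ht
  unfold moriTotalWeight
  linarith

theorem moriTotalWeight_pos {β : ℝ} (hβ : 0 < β) {t : ℕ} (ht : 2 ≤ t) :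
    0 < moriTotalWeight β t := by
  have h2 : (2 : ℝ) ≤ t := mod_cast ht
  exact (mul_pos hβ (by linarith)).trans_le (mul_sub_one_le_moriTotalWeight β ht)

namespace ParentSeq

variable {n : ℕ}

theorem pval_mem_Icc (f : ParentSeq n) {j : ℕ} (hj : j ∈ Icc 2 n) :
    pval f j ∈ Icc 1 (j - 1) := by
  have h := mem_Icc.mp hj
  rw [pval, dif_pos h]
  exact mem_Icc.mpr (f ⟨j, h⟩).2

/-- The parent sequence of length `n + 1` that extends `f` by letting `v_{n+1}` choose the
parent `v_i`. -/
def snoc (f : ParentSeq n) (i : Set.Icc 1 n) : ParentSeq (n + 1) := fun t ↦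
  if h : (t : ℕ) ≤ n then f ⟨t, t.2.1, h⟩
  else ⟨i, i.2.1, i.2.2.trans (Nat.le_sub_one_of_lt (not_le.mp h))⟩

theorem pval_snoc_of_le (f : ParentSeq n) (i : Set.Icc 1 n) {j : ℕ} (hj : j ≤ n) :
    pval (f.snoc i) j = pval f j := by
  simp [pval, snoc, hj, Nat.le_add_right_of_le]

theorem pval_snoc_last (hn : 1 ≤ n) (f : ParentSeq n) (i : Set.Icc 1 n) :
    pval (f.snoc i) (n + 1) = i := by
  simp [pval, snoc, hn]

/-- Splitting off the parent of the last vertex, as an equivalence. -/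
def snocEquiv (hn : 1 ≤ n) : ParentSeq n × Set.Icc 1 n ≃ ParentSeq (n + 1) where
  toFun p := p.1.snoc p.2
  invFun g := (fun t ↦ g ⟨t, t.2.1, Nat.le_add_right_of_le t.2.2⟩,
    g ⟨n + 1, Nat.add_le_add_right hn 1, le_rfl⟩)
  left_inv := by
    rintro ⟨f, i⟩
    refine Prod.ext (funext fun t ↦ dif_pos t.2.2) (dif_neg ?_)
    exact Nat.not_succ_le_self n
  right_inv g := by
    funext t
    by_cases h : (t : ℕ) ≤ n
    · exact dif_pos h
    · obtain ⟨t, ht₂, htn⟩ := t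
      obtain rfl : t = n + 1 := le_antisymm htn (not_le.mp h)
      exact dif_neg h

theorem snocEquiv_apply (hn : 1 ≤ n) (f : ParentSeq n) (i : Set.Icc 1 n) :
    snocEquiv hn (f, i) = f.snoc i :=
  rfl

theorem deg_snoc_of_le (f : ParentSeq n) (i : Set.Icc 1 n) {t : ℕ} (ht : t ≤ n) (k : ℕ) :
    deg (f.snoc i) t k = deg f t k := by
  unfold deg
  congr 2
  refine filter_congr fun j hj ↦ ?_
  rw [pval_snoc_of_le f i ((mem_Icc.mp hj).2.trans ht)]

theorem deg_snoc_last (hn : 1 ≤ n) (f : ParentSeq n) (i : Set.Icc 1 n) (k : ℕ) :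
    deg (f.snoc i) (n + 1) k = deg f n k + if k = i then 1 else 0 := by
  rw [← deg_snoc_of_le f i le_rfl]
  simp only [deg, card_filter, sum_Icc_succ_top (Nat.add_le_add_right hn 1),
    pval_snoc_last hn, @eq_comm _ (i : ℕ)]
  ring

theorem sum_deg (hn : 1 ≤ n) (f : ParentSeq n) : ∑ i ∈ Icc 1 n, deg f n i = 2 * (n - 1) := by
  have hmaps : ∀ j ∈ Icc 2 n, pval f j ∈ Icc 1 n := fun j hj ↦ by
    have := mem_Icc.mp (f.pval_mem_Icc hj)
    have := mem_Icc.mp hj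
    exact mem_Icc.mpr (by omega)
  have hne_one : {i ∈ Icc 1 n | 2 ≤ i} = Icc 2 n := by
    ext i
    simp only [mem_filter, mem_Icc]
    omega
  simp only [deg, sum_add_distrib, ← card_eq_sum_card_fiberwise hmaps, ← card_filter, hne_one,
    Nat.card_Icc]
  omega

theorem sum_deg_add (hn : 1 ≤ n) (f : ParentSeq n) (β : ℝ) :
    ∑ i ∈ Icc 1 n, ((deg f n i : ℝ) + β) = moriTotalWeight β (n + 1) := by
  rw [sum_add_distrib, ← Nat.cast_sum, f.sum_deg hn, sum_const, Nat.card_Icc, nsmul_eq_mul,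
    moriTotalWeight]
  push_cast [hn]
  ring

theorem moriP_snoc (hn : 1 ≤ n) (β : ℝ) (f : ParentSeq n) (i : Set.Icc 1 n) :
    moriP β (f.snoc i) = moriP β f * ((deg f n i + β) / moriTotalWeight β (n + 1)) := by
  simp only [moriP, prod_Icc_succ_top (Nat.add_le_add_right hn 1), pval_snoc_last hn,
    Nat.add_sub_cancel, deg_snoc_of_le f i le_rfl]
  refine congrArg (· * _) (prod_congr rfl fun t ht ↦ ?_)
  have htn := (mem_Icc.mp ht).2
  rw [pval_snoc_of_le f i htn, deg_snoc_of_le f i ((Nat.sub_le t 1).trans htn)]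

end ParentSeq

theorem moriE_succ {n : ℕ} (hn : 1 ≤ n) (β : ℝ) (X : ParentSeq (n + 1) → ℝ) :
    moriE (n + 1) β X = moriE n β fun f ↦
      (∑ i : Set.Icc 1 n, (deg f n i + β) * X (f.snoc i)) / moriTotalWeight β (n + 1) := by
  unfold moriE
  rw [← (ParentSeq.snocEquiv hn).sum_comp, Fintype.sum_prod_type]
  refine sum_congr rfl fun f _ ↦ ?_
  simp only [sum_div, mul_sum]
  refine sum_congr rfl fun i _ ↦ ?_
  rw [ParentSeq.snocEquiv_apply, ParentSeq.moriP_snoc hn]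
  ring

theorem moriE_of_le_one {n : ℕ} (hn : n ≤ 1) (β : ℝ) (X : ParentSeq n → ℝ) (f : ParentSeq n) :
    moriE n β X = X f := by
  have hempty : IsEmpty (Set.Icc 2 n) := by
    rw [Set.Icc_eq_empty (by omega)]
    infer_instance
  have : Subsingleton (ParentSeq n) := ⟨fun g h ↦ funext hempty.elim⟩
  rw [moriE, Fintype.sum_subsingleton _ f, moriP, Icc_eq_empty (by omega), prod_empty, one_mul]

/-! ### Rising factorials -/

theorem mul_eval_ascPochhammer_add_one {R : Type*} [CommSemiring R] (x : R) (r : ℕ) :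
    x * (ascPochhammer R r).eval (x + 1) = (ascPochhammer R (r + 1)).eval x := by
  simp [ascPochhammer_succ_left]

theorem eval_ascPochhammer_eq_Gamma_div {x : ℝ} (hx : 0 < x) (r : ℕ) :
    (ascPochhammer ℝ r).eval x = Real.Gamma (x + r) / Real.Gamma x := by
  induction r with
  | zero => simp [(Real.Gamma_pos_of_pos hx).ne']
  | succ r ih =>
    rw [ascPochhammer_succ_eval, ih, Nat.cast_succ, ← add_assoc, Real.Gamma_add_one (by positivity)]
    ring

section Bump

variable {ι R : Type*} [DecidableEq ι] [CommSemiring R] {s : Finset ι} {i : ι}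

theorem mul_prod_eval_ascPochhammer_bump (x : ι → R) (r : ι → ℕ) (hi : i ∈ s) :
    x i * ∏ k ∈ s, (ascPochhammer R (r k)).eval (x k + if k = i then 1 else 0) =
      ∏ k ∈ s, (ascPochhammer R (r k + if k = i then 1 else 0)).eval (x k) := by
  rw [← mul_prod_erase s _ hi, ← mul_prod_erase s _ hi, if_pos rfl, if_pos rfl, ← mul_assoc,
    mul_eval_ascPochhammer_add_one]
  refine congrArg (_ * ·) (prod_congr rfl fun k hk ↦ ?_)
  rw [if_neg (ne_of_mem_erase hk), if_neg (ne_of_mem_erase hk), add_zero, add_zero]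

theorem mul_prod_eval_ascPochhammer_bump_eq_add_mul (x : ι → R) (r : ι → ℕ)
    (hr : i ∉ s → r i = 0) :
    x i * ∏ k ∈ s, (ascPochhammer R (r k)).eval (x k + if k = i then 1 else 0) =
      (x i + r i) * ∏ k ∈ s, (ascPochhammer R (r k)).eval (x k) := by
  by_cases hi : i ∈ s
  · have herase : ∏ k ∈ s.erase i, (ascPochhammer R (r k + if k = i then 1 else 0)).eval (x k) =
        ∏ k ∈ s.erase i, (ascPochhammer R (r k)).eval (x k) :=
      prod_congr rfl fun k hk ↦ by rw [if_neg (ne_of_mem_erase hk), add_zero]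
    rw [mul_prod_eval_ascPochhammer_bump x r hi, ← mul_prod_erase s _ hi, ← mul_prod_erase s _ hi,
      if_pos rfl, ascPochhammer_succ_eval, herase]
    ring
  · rw [hr hi, Nat.cast_zero, add_zero]
    refine congrArg (_ * ·) (prod_congr rfl fun k hk ↦ ?_)
    rw [if_neg (ne_of_mem_of_not_mem hk hi), add_zero]

end Bump

/-! ### The probability as a product over time steps -/

namespace PossibleForest

variable {n : ℕ} {β : ℝ} (S : PossibleForest)

/-- The number of edges of `S` into `v_k` that start at a vertex born after time `n`. -/
def pendingIn (n k : ℕ) : ℕ :=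
  #{e ∈ S.E | e.2 = k ∧ n < e.1}

/-- `f` contains all the edges of `S` whose tail is already born, that is, has index at
most `n`. -/
def AgreesWith (f : ParentSeq n) : Prop :=
  ∀ e ∈ S.E, e.1 ≤ n → pval f e.1 = e.2

open Classical in
/-- A multiple, by a constant depending on `n` only, of the conditional probability that the tree
will contain `S` given its first `n` parents. Each edge still pending at `v_k` will raise the
degree of `v_k` by one, whence the rising factorial. The vertices `k > n` are included: `deg f n k`
is then the degree `1` that `v_k` has at birth. -/
noncomputable def potential (β : ℝ) (f : ParentSeq n) : ℝ :=
  if S.AgreesWith f then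
    ∏ k ∈ S.Vminus, (ascPochhammer ℝ (S.pendingIn n k)).eval (deg f n k + β)
  else 0

/-- The factor that the time step `a` contributes to the probability of `S`. If `v_a` has to choose
a prescribed parent, it is the normalisation of that choice; otherwise it is the correction coming
from the possibility that `v_a` raises the degree of a vertex with pending edges. -/
noncomputable def stepFactor (β : ℝ) (a : ℕ) : ℝ :=
  if a ∈ S.Vplus then 1 / moriTotalWeight β a else 1 + S.cS a / moriTotalWeight β a

theorem stepFactor_pos (hβ : 0 < β) {a : ℕ} (ha : 2 ≤ a) : 0 < S.stepFactor β a := by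
  have := moriTotalWeight_pos hβ ha
  unfold stepFactor
  split_ifs <;> positivity

variable {S}

theorem one_le_of_mem_V {v : ℕ} (hv : v ∈ S.V) : 1 ≤ v := by
  obtain h | h := mem_union.mp hv <;> obtain ⟨e, he, rfl⟩ := mem_image.mp h
  · exact (S.one_le e he).trans (S.snd_lt_fst e he).le
  · exact S.one_le e he

theorem fst_mem_V {e : ℕ × ℕ} (he : e ∈ S.E) : e.1 ∈ S.V :=
  mem_union_left _ (mem_image_of_mem _ he)

theorem snd_mem_V {e : ℕ × ℕ} (he : e ∈ S.E) : e.2 ∈ S.V :=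
  mem_union_right _ (mem_image_of_mem _ he)

theorem two_le_fst {e : ℕ × ℕ} (he : e ∈ S.E) : 2 ≤ e.1 :=
  (Nat.succ_le_succ (S.one_le e he)).trans (S.snd_lt_fst e he)

theorem mem_Vplus_iff {a : ℕ} : a ∈ S.Vplus ↔ ∃ j, (a, j) ∈ S.E := by
  simp [Vplus]

theorem din_eq_zero {k : ℕ} (hk : k ∉ S.Vminus) : S.din k = 0 := by
  rw [din, card_eq_zero, filter_eq_empty_iff]
  rintro e he rfl
  exact hk (mem_image_of_mem _ he)

theorem pendingIn_eq_zero {k : ℕ} (hk : k ∉ S.Vminus) : S.pendingIn n k = 0 := by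
  rw [pendingIn, card_eq_zero, filter_eq_empty_iff]
  rintro e he ⟨rfl, -⟩
  exact hk (mem_image_of_mem _ he)

theorem pendingIn_of_forall_le (hn : ∀ e ∈ S.E, e.1 ≤ n) (k : ℕ) : S.pendingIn n k = 0 := by
  rw [pendingIn, card_eq_zero, filter_eq_empty_iff]
  exact fun e he h ↦ (hn e he).not_gt h.2

theorem pendingIn_of_le_one (hn : n ≤ 1) (k : ℕ) : S.pendingIn n k = S.din k := by
  refine congrArg card (filter_congr fun e he ↦ and_iff_left ?_)
  exact hn.trans_lt (two_le_fst he)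

variable (S)

theorem pendingIn_eq_succ_add (n k : ℕ) :
    S.pendingIn n k = S.pendingIn (n + 1) k + if (n + 1, k) ∈ S.E then 1 else 0 := by
  have hborn : #{e ∈ S.E | e.2 = k ∧ e.1 = n + 1} = if (n + 1, k) ∈ S.E then 1 else 0 := by
    have heq : {e ∈ S.E | e.2 = k ∧ e.1 = n + 1} = {e ∈ S.E | e = (n + 1, k)} :=
      filter_congr fun e _ ↦ by rw [Prod.ext_iff, and_comm]
    rw [heq, filter_eq', apply_ite card, card_singleton, card_empty]
  rw [← hborn, pendingIn, pendingIn, ← card_union_of_disjoint, ← filter_or]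
  · refine congrArg card (filter_congr fun e _ ↦ ?_)
    omega
  · refine disjoint_filter.mpr fun e _ ↦ ?_
    omega

theorem sum_pendingIn (n : ℕ) : ∑ k ∈ Icc 1 n, S.pendingIn n k = S.cS (n + 1) := by
  have hmaps : ∀ e ∈ S.E.filter (fun e ↦ n + 1 ≤ e.1 ∧ e.2 < n + 1), e.2 ∈ Icc 1 n := by
    intro e he
    obtain ⟨heE, -, hlt⟩ := mem_filter.mp he
    exact mem_Icc.mpr ⟨S.one_le e heE, Nat.le_of_lt_succ hlt⟩
  rw [cS, card_eq_sum_card_fiberwise hmaps]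
  refine sum_congr rfl fun k hk ↦ ?_
  rw [filter_filter]
  refine congrArg card (filter_congr fun e _ ↦ ?_)
  have := (mem_Icc.mp hk).2
  omega

theorem agreesWith_snoc_iff (hn : 1 ≤ n) (f : ParentSeq n) (i : Set.Icc 1 n) :
    S.AgreesWith (f.snoc i) ↔ S.AgreesWith f ∧ ∀ j, (n + 1, j) ∈ S.E → i = j := by
  constructor
  · intro h
    refine ⟨fun e he hen ↦ ?_, fun j hj ↦ ?_⟩
    · rw [← ParentSeq.pval_snoc_of_le f i hen, h e he (Nat.le_add_right_of_le hen)]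
    · rw [← ParentSeq.pval_snoc_last hn f i, h _ hj le_rfl]
  · rintro ⟨hf, hi⟩ ⟨a, j⟩ he han
    obtain hle | rfl : a ≤ n ∨ a = n + 1 := Nat.le_or_eq_of_le_succ han
    · rw [ParentSeq.pval_snoc_of_le f i hle, hf _ he hle]
    · rw [ParentSeq.pval_snoc_last hn f i, hi j he]

theorem potential_snoc (hn : 1 ≤ n) (β : ℝ) {f : ParentSeq n} {i : Set.Icc 1 n}
    (h : S.AgreesWith (f.snoc i)) :
    S.potential β (f.snoc i) = ∏ k ∈ S.Vminus,
      (ascPochhammer ℝ (S.pendingIn (n + 1) k)).eval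
        ((deg f n k + β) + if k = i then 1 else 0) := by
  rw [potential, if_pos h]
  refine prod_congr rfl fun k _ ↦ ?_
  rw [f.deg_snoc_last hn, Nat.cast_add, Nat.cast_ite, Nat.cast_one, Nat.cast_zero,
    add_right_comm]

theorem weight_mul_potential_snoc_of_notMem_Vplus (hn : 1 ≤ n) (β : ℝ) (h : n + 1 ∉ S.Vplus)
    (f : ParentSeq n) (i : Set.Icc 1 n) :
    (deg f n i + β) * S.potential β (f.snoc i) =
      (deg f n i + β + S.pendingIn n i) * S.potential β f := by
  have hnone : ∀ j, (n + 1, j) ∉ S.E := by simpa only [mem_Vplus_iff, not_exists] using h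
  have hiff : S.AgreesWith (f.snoc i) ↔ S.AgreesWith f := by
    rw [agreesWith_snoc_iff S hn]
    exact and_iff_left fun j hj ↦ absurd hj (hnone j)
  have hpending : ∀ k, S.pendingIn n k = S.pendingIn (n + 1) k := fun k ↦ by
    rw [pendingIn_eq_succ_add, if_neg (hnone k), add_zero]
  by_cases hf : S.AgreesWith f
  · rw [S.potential_snoc hn β (hiff.mpr hf), potential, if_pos hf]
    simp only [hpending]
    exact mul_prod_eval_ascPochhammer_bump_eq_add_mul (fun k ↦ (deg f n k + β : ℝ)) _
      pendingIn_eq_zero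
  · rw [potential, potential, if_neg hf, if_neg (hiff.not.mpr hf), mul_zero, mul_zero]

theorem weight_mul_potential_snoc_of_mem (hn : 1 ≤ n) (β : ℝ) {j : ℕ} (h : (n + 1, j) ∈ S.E)
    (f : ParentSeq n) (i : Set.Icc 1 n) :
    (deg f n i + β) * S.potential β (f.snoc i) = if (i : ℕ) = j then S.potential β f else 0 := by
  have hiff : ∀ k, (n + 1, k) ∈ S.E ↔ k = j := fun k ↦
    ⟨fun hk ↦ congrArg Prod.snd (S.outdeg_le_one _ hk _ h rfl), fun hk ↦ hk ▸ h⟩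
  have hagree : S.AgreesWith (f.snoc i) ↔ S.AgreesWith f ∧ (i : ℕ) = j := by
    simp only [S.agreesWith_snoc_iff hn, hiff, forall_eq]
  by_cases hf : S.AgreesWith (f.snoc i)
  · obtain ⟨hf', hij⟩ := hagree.mp hf
    have hj : j ∈ S.Vminus := mem_image_of_mem Prod.snd h
    rw [S.potential_snoc hn β hf, if_pos hij, potential, if_pos hf', hij,
      mul_prod_eval_ascPochhammer_bump (fun k ↦ (deg f n k + β : ℝ)) _ hj]
    simp only [S.pendingIn_eq_succ_add n, hiff]
  · rw [potential, if_neg hf, mul_zero]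
    split_ifs with hij
    · rw [potential, if_neg fun hf' ↦ hf (hagree.mpr ⟨hf', hij⟩)]
    · rfl

theorem sum_weight_mul_potential_snoc (hβ : 0 < β) (hn : 1 ≤ n) (f : ParentSeq n) :
    (∑ i : Set.Icc 1 n, (deg f n i + β) * S.potential β (f.snoc i)) / moriTotalWeight β (n + 1) =
      S.stepFactor β (n + 1) * S.potential β f := by
  have hW := moriTotalWeight_pos hβ (Nat.succ_le_succ hn)
  have hsum (g : ℕ → ℝ) : ∑ i : Set.Icc 1 n, g i = ∑ i ∈ Icc 1 n, g i :=
    (sum_subtype _ (fun _ ↦ mem_Icc) g).symm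
  by_cases h : n + 1 ∈ S.Vplus
  · obtain ⟨j, hj⟩ := mem_Vplus_iff.mp h
    have hj_mem : j ∈ Icc 1 n :=
      mem_Icc.mpr ⟨S.one_le _ hj, Nat.le_of_lt_succ (S.snd_lt_fst _ hj)⟩
    simp only [S.weight_mul_potential_snoc_of_mem hn β hj f]
    rw [hsum (fun i ↦ if i = j then S.potential β f else 0), sum_ite_eq', if_pos hj_mem,
      stepFactor, if_pos h]
    ring
  · simp only [S.weight_mul_potential_snoc_of_notMem_Vplus hn β h f, ← sum_mul]
    rw [hsum (fun i ↦ deg f n i + β + S.pendingIn n i), sum_add_distrib, f.sum_deg_add hn,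
      ← Nat.cast_sum, sum_pendingIn, stepFactor, if_neg h]
    field_simp

theorem moriE_potential_of_le_one (β : ℝ) (hn : n ≤ 1) :
    moriE n β (S.potential β) =
      ∏ k ∈ S.Vminus, (ascPochhammer ℝ (S.din k)).eval ((if 2 ≤ k then 1 else 0) + β) := by
  obtain ⟨f⟩ : Nonempty (ParentSeq n) := ⟨fun t ↦ absurd (t.2.1.trans t.2.2) (by omega)⟩
  have hagree : S.AgreesWith f := fun e he hen ↦ absurd (two_le_fst he) (by omega)
  have hempty : Icc 2 n = ∅ := Icc_eq_empty (by omega)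
  rw [moriE_of_le_one hn β _ f, potential, if_pos hagree]
  simp [deg, hempty, pendingIn_of_le_one hn]

theorem moriE_potential (hβ : 0 < β) (n : ℕ) :
    moriE n β (S.potential β) =
      (∏ k ∈ S.Vminus, (ascPochhammer ℝ (S.din k)).eval ((if 2 ≤ k then 1 else 0) + β)) *
        ∏ a ∈ Icc 2 n, S.stepFactor β a := by
  obtain rfl | hn := Nat.eq_zero_or_pos n
  · simpa using S.moriE_potential_of_le_one β zero_le_one
  · induction n, hn using Nat.le_induction with
    | base => simpa using S.moriE_potential_of_le_one β le_rfl
    | succ n hn ih =>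
      simp only [moriE_succ hn, S.sum_weight_mul_potential_snoc hβ hn]
      rw [prod_Icc_succ_top (Nat.add_le_add_right hn 1), ← mul_assoc, ← ih]
      simp only [moriE, sum_mul]
      exact sum_congr rfl fun f _ ↦ by ring

theorem prod_eval_ascPochhammer_din (hβ : 0 < β) :
    ∏ k ∈ S.Vminus, (ascPochhammer ℝ (S.din k)).eval ((if 2 ≤ k then 1 else 0) + β) =
      β / (S.din 1 + β) *
        ∏ k ∈ S.Vminus, Real.Gamma (1 + S.din k + β) / Real.Gamma (1 + β) := by
  have hGamma : ∀ r : ℕ, (ascPochhammer ℝ r).eval (1 + β) =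
      Real.Gamma (1 + r + β) / Real.Gamma (1 + β) := fun r ↦ by
    rw [eval_ascPochhammer_eq_Gamma_div (by positivity), add_right_comm]
  have hfactor : ∀ k ∈ S.Vminus,
      (ascPochhammer ℝ (S.din k)).eval ((if 2 ≤ k then 1 else 0) + β) =
        (if k = 1 then β / (S.din k + β) else 1) *
          (Real.Gamma (1 + S.din k + β) / Real.Gamma (1 + β)) := by
    intro k hk
    rw [← hGamma]
    obtain rfl | hk2 : k = 1 ∨ 2 ≤ k := by
      have := one_le_of_mem_V (mem_union_right _ hk)
      omega
    · have hshift := mul_eval_ascPochhammer_add_one β (S.din 1)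
      rw [ascPochhammer_succ_eval, add_comm β 1] at hshift
      rw [if_neg (by decide), if_pos rfl, zero_add]
      field_simp
      linarith
    · rw [if_pos hk2, if_neg (by omega), one_mul]
  rw [prod_congr rfl hfactor, prod_mul_distrib, prod_ite_eq']
  split_ifs with h
  · rfl
  · rw [din_eq_zero h, Nat.cast_zero, zero_add, div_self hβ.ne']

theorem subProb_eq_prod_stepFactor (hβ : 0 < β) {t : ℕ} (ht : ∀ i ∈ S.V, i ≤ t) :
    subProb β t S = β / (S.din 1 + β) *
      (∏ k ∈ S.Vminus, Real.Gamma (1 + S.din k + β) / Real.Gamma (1 + β)) *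
        ∏ a ∈ Icc 2 t, S.stepFactor β a := by
  have hborn : ∀ e ∈ S.E, e.1 ≤ t := fun e he ↦ ht _ (fst_mem_V he)
  have hagree (f : ParentSeq t) : S.AgreesWith f ↔ ∀ e ∈ S.E, pval f e.1 = e.2 :=
    forall₂_congr fun e he ↦ forall_prop_of_true (hborn e he)
  rw [← S.prod_eval_ascPochhammer_din hβ, ← S.moriE_potential hβ, subProb, moriE]
  refine sum_congr rfl fun f _ ↦ ?_
  simp only [potential, hagree, pendingIn_of_forall_le hborn, ascPochhammer_zero,
    Polynomial.eval_one, prod_const_one, mul_ite, mul_one, mul_zero]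

end PossibleForest

/-! ### Comparison with the closed form -/

theorem prod_Ioc_div_sub_one {K : Type*} [Field K] [CharZero K] {i j : ℕ} (hj : 1 ≤ j)
    (hij : j ≤ i) : ∏ a ∈ Ioc j i, ((a : K) / (a - 1)) = i / j := by
  have hj' : (j : K) ≠ 0 := mod_cast (Nat.one_le_iff_ne_zero.mp hj)
  induction i, hij using Nat.le_induction with
  | base => rw [Ioc_self, prod_empty, div_self hj']
  | succ i hij ih =>
    have hi : (i : K) ≠ 0 := mod_cast (Nat.one_le_iff_ne_zero.mp (hj.trans hij))
    rw [prod_Ioc_succ_top hij, ih, Nat.cast_succ, add_sub_cancel_right]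
    field_simp

theorem one_div_mul_rpow_eq {β x y : ℝ} (hβ : 0 < β) (hx : 0 < x) (hy : 0 < y) :
    1 / ((2 + β) * (x ^ (1 + β) * y) ^ (1 / (2 + β))) =
      1 / ((2 + β) * x) * (x / y) ^ (1 / (2 + β)) := by
  have hsplit : x ^ (1 + β) * y = x ^ (2 + β) / (x / y) := by
    rw [show 2 + β = 1 + β + 1 by ring, Real.rpow_add_one hx.ne']
    field_simp
  have hroot : (x ^ (2 + β)) ^ (1 / (2 + β)) = x := by
    rw [← Real.rpow_mul hx.le, mul_one_div_cancel (by positivity), Real.rpow_one]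
  have : (x / y) ^ (1 / (2 + β)) ≠ 0 := by positivity
  rw [hsplit, Real.div_rpow (by positivity) (by positivity), hroot]
  field_simp

theorem prod_eq_prod_mul_exp_sum_log_div {ι : Type*} {s : Finset ι} {f g : ι → ℝ}
    (hf : ∀ a ∈ s, 0 < f a) (hg : ∀ a ∈ s, 0 < g a) :
    ∏ a ∈ s, f a = (∏ a ∈ s, g a) * Real.exp (∑ a ∈ s, Real.log (f a / g a)) := by
  rw [Real.exp_sum, ← prod_mul_distrib]
  refine prod_congr rfl fun a ha ↦ ?_
  rw [Real.exp_log (div_pos (hf a ha) (hg a ha)), mul_div_cancel₀ _ (hg a ha).ne']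

theorem one_div_le_log_div_sub_one {x : ℝ} (hx : 1 < x) : 1 / x ≤ Real.log (x / (x - 1)) := by
  have : 0 < x - 1 := sub_pos.mpr hx
  refine (Eq.le ?_).trans (Real.one_sub_inv_le_log_of_pos (by positivity))
  field_simp
  ring

theorem log_div_sub_one_le_one_div {x : ℝ} (hx : 1 < x) :
    Real.log (x / (x - 1)) ≤ 1 / (x - 1) := by
  have : 0 < x - 1 := sub_pos.mpr hx
  refine (Real.log_le_sub_one_of_pos (by positivity)).trans_eq ?_
  field_simp
  ring

theorem sub_sq_le_log_one_add {q : ℝ} (hq : 0 ≤ q) : q - q ^ 2 ≤ Real.log (1 + q) := by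
  refine le_trans ?_ (Real.one_sub_inv_le_log_of_pos (by positivity))
  rw [← sub_nonneg]
  have : 1 - (1 + q)⁻¹ - (q - q ^ 2) = q ^ 3 / (1 + q) := by
    field_simp
    ring
  rw [this]
  positivity

theorem log_one_add_le {q : ℝ} (hq : 0 ≤ q) : Real.log (1 + q) ≤ q := by
  have := Real.log_le_sub_one_of_pos (add_pos_of_pos_of_nonneg one_pos hq)
  linarith

theorem abs_log_one_add_div_moriTotalWeight_sub_le {β : ℝ} (hβ : 0 < β) {a c : ℕ} (ha : 2 ≤ a)
    (hc : 1 ≤ c) :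
    |Real.log (1 + (4 + β) / moriTotalWeight β a) - c / (2 + β) * Real.log (a / (a - 1))| ≤
      (4 + β) / β * (c ^ 2 / (a - 1)) := by
  have hW := moriTotalWeight_pos hβ ha
  have hβW := mul_sub_one_le_moriTotalWeight β ha
  have ha₁ : (1 : ℝ) < a := mod_cast ha
  have ha₀ : (0 : ℝ) < a - 1 := sub_pos.mpr ha₁
  have hc₁ : (1 : ℝ) ≤ c := mod_cast hc
  have hcc : (c : ℝ) ≤ c ^ 2 := le_self_pow₀ hc₁ two_ne_zero
  have hq : 0 ≤ (4 + β) / moriTotalWeight β a := by positivity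
  have hlog : 0 ≤ Real.log (a / (a - 1)) :=
    (one_div_nonneg.mpr (by positivity)).trans (one_div_le_log_div_sub_one ha₁)
  refine abs_sub_le_of_nonneg_of_le (Real.log_nonneg (le_add_of_nonneg_right hq)) ?_
    (by positivity) ?_
  · calc Real.log (1 + (4 + β) / moriTotalWeight β a)
      _ ≤ (4 + β) / moriTotalWeight β a := log_one_add_le hq
      _ ≤ (4 + β) / (β * (a - 1)) := by gcongr
      _ = (4 + β) / β * (1 / (a - 1)) := by field_simp
      _ ≤ (4 + β) / β * (c ^ 2 / (a - 1)) := by gcongr; exact hc₁.trans hcc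
  · calc c / (2 + β) * Real.log (a / (a - 1))
      _ ≤ c ^ 2 / β * (1 / (a - 1)) := by
        gcongr
        · linarith
        · exact log_div_sub_one_le_one_div ha₁
      _ = 1 / β * (c ^ 2 / (a - 1)) := by ring
      _ ≤ (4 + β) / β * (c ^ 2 / (a - 1)) := by gcongr; linarith

theorem div_moriTotalWeight_sub_div_le {β : ℝ} (hβ : 0 < β) {a : ℕ} (c : ℕ) (ha : 2 ≤ a) :
    c / moriTotalWeight β a - c / (2 + β) * (1 / a) ≤
      2 * (1 + β) / β ^ 2 * (c ^ 2 / (a * (a - 1))) := by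
  have hW := moriTotalWeight_pos hβ ha
  have hβW := mul_sub_one_le_moriTotalWeight β ha
  have ha₁ : (1 : ℝ) < a := mod_cast ha
  have ha₀ : (0 : ℝ) < a - 1 := sub_pos.mpr ha₁
  have hcc : (c : ℝ) ≤ c ^ 2 := mod_cast Nat.le_self_pow two_ne_zero c
  have hconst : (4 + β) / (2 + β) / β ≤ 2 * (1 + β) / β ^ 2 := by
    rw [div_div, div_le_div_iff₀ (by positivity) (by positivity)]
    nlinarith [pow_pos hβ 2, pow_pos hβ 3]
  calc c / moriTotalWeight β a - c / (2 + β) * (1 / a)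
    _ = (4 + β) / (2 + β) * (c / (a * moriTotalWeight β a)) := by
      field_simp
      unfold moriTotalWeight
      ring
    _ ≤ (4 + β) / (2 + β) * (c ^ 2 / (a * (β * (a - 1)))) := by gcongr
    _ = (4 + β) / (2 + β) / β * (c ^ 2 / (a * (a - 1))) := by field_simp
    _ ≤ 2 * (1 + β) / β ^ 2 * (c ^ 2 / (a * (a - 1))) := by gcongr

theorem sq_div_moriTotalWeight_le {β : ℝ} (hβ : 0 < β) {a : ℕ} (c : ℕ) (ha : 2 ≤ a) :
    (c / moriTotalWeight β a) ^ 2 ≤ 2 * (1 + β) / β ^ 2 * (c ^ 2 / (a * (a - 1))) := by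
  have hW := moriTotalWeight_pos hβ ha
  have hβW := mul_sub_one_le_moriTotalWeight β ha
  have ha₂ : (2 : ℝ) ≤ a := mod_cast ha
  have ha₀ : (0 : ℝ) < a - 1 := by linarith
  calc (c / moriTotalWeight β a) ^ 2
    _ ≤ (c / (β * (a - 1))) ^ 2 := by gcongr
    _ = 1 / β ^ 2 * (c ^ 2 / ((a - 1) * (a - 1))) := by field_simp
    _ ≤ 1 / β ^ 2 * (c ^ 2 / (a / 2 * (a - 1))) := by gcongr; linarith
    _ = 2 / β ^ 2 * (c ^ 2 / (a * (a - 1))) := by field_simp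
    _ ≤ 2 * (1 + β) / β ^ 2 * (c ^ 2 / (a * (a - 1))) := by gcongr; linarith

theorem abs_log_one_add_natCast_div_moriTotalWeight_sub_le {β : ℝ} (hβ : 0 < β) {a : ℕ} (c : ℕ)
    (ha : 2 ≤ a) :
    |Real.log (1 + c / moriTotalWeight β a) - c / (2 + β) * Real.log (a / (a - 1))| ≤
      2 * (1 + β) / β ^ 2 * (c ^ 2 / (a * (a - 1))) := by
  have hW := moriTotalWeight_pos hβ ha
  have ha₁ : (1 : ℝ) < a := mod_cast ha
  have ha₀ : (0 : ℝ) < a - 1 := sub_pos.mpr ha₁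
  have hq : (0 : ℝ) ≤ c / moriTotalWeight β a := by positivity
  have hlower : c / (2 + β) * (1 / a) ≤ c / (2 + β) * Real.log (a / (a - 1)) := by
    gcongr
    exact one_div_le_log_div_sub_one ha₁
  have hupper : c / (2 + β) * Real.log (a / (a - 1)) ≤ c / moriTotalWeight β a :=
    calc c / (2 + β) * Real.log (a / (a - 1))
      _ ≤ c / (2 + β) * (1 / (a - 1)) := by
        gcongr
        exact log_div_sub_one_le_one_div ha₁
      _ = c / ((2 + β) * (a - 1)) := by field_simp
      _ ≤ c / moriTotalWeight β a := by
        gcongr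
        unfold moriTotalWeight
        linarith
  rw [abs_le]
  constructor
  · linarith [sub_sq_le_log_one_add hq, sq_div_moriTotalWeight_le hβ c ha]
  · linarith [log_one_add_le hq, div_moriTotalWeight_sub_div_le hβ c ha]

/-! ### Sums over the vertices of a finite set -/

theorem card_filter_lt_orderEmbOfFin {α : Type*} [LinearOrder α] {s : Finset α} {k : ℕ}
    (h : #s = k) (j : Fin k) : #{u ∈ s | u < s.orderEmbOfFin h j} = j := by
  have heq : {u ∈ s | u < s.orderEmbOfFin h j} =
      (Iio j).map (s.orderEmbOfFin h).toEmbedding := by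
    ext u
    simp only [mem_filter, mem_map, mem_Iio, RelEmbedding.coe_toEmbedding]
    constructor
    · rintro ⟨hu, hlt⟩
      obtain ⟨i, rfl⟩ : u ∈ Set.range (s.orderEmbOfFin h) := by rwa [range_orderEmbOfFin]
      exact ⟨i, (s.orderEmbOfFin h).lt_iff_lt.mp hlt, rfl⟩
    · rintro ⟨i, hi, rfl⟩
      exact ⟨orderEmbOfFin_mem s h i, (s.orderEmbOfFin h).lt_iff_lt.mpr hi⟩
  rw [heq, card_map, Fin.card_Iio]

theorem sum_orderIsoOfFin_div {α K : Type*} [LinearOrder α] [DivisionSemiring K] (s : Finset α)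
    (h : α → K) :
    (∑ j : Fin #s, if 1 ≤ (j : ℕ) then h (s.orderIsoOfFin rfl j) / (j : ℕ) else 0) =
      ∑ v ∈ s, h v / #{u ∈ s | u < v} := by
  rw [← sum_coe_sort s]
  refine Fintype.sum_equiv (s.orderIsoOfFin rfl).toEquiv _ _ fun j ↦ ?_
  rw [RelIso.coe_fn_toEquiv, coe_orderIsoOfFin_apply, card_filter_lt_orderEmbOfFin]
  -- the first term of the right-hand sum is a division by zero
  split_ifs with hj
  · rfl
  · rw [Nat.lt_one_iff.mp (not_le.mp hj), Nat.cast_zero, div_zero]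

theorem card_filter_lt_le_sub_one {V : Finset ℕ} (hV : ∀ v ∈ V, 1 ≤ v) (a : ℕ) :
    #{u ∈ V | u < a} ≤ a - 1 := by
  have hsub : {u ∈ V | u < a} ⊆ Ico 1 a := fun u hu ↦
    mem_Ico.mpr ⟨hV u (mem_filter.mp hu).1, (mem_filter.mp hu).2⟩
  simpa using card_le_card hsub

-- Between consecutive elements `v < v'` of `V` the function `h` is constant, and there the sum of
-- `1 / (a (a - 1))` telescopes to at most `1 / v`, hence to at most `1 / #{u ∈ V | u < v'}`.
theorem sum_div_mul_sub_one_add_le {V : Finset ℕ} (hV : ∀ v ∈ V, 1 ≤ v) {h : ℕ → ℝ}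
    (hnonneg : ∀ a, 0 ≤ h a) (hone : h 1 = 0) (hconst : ∀ a ∉ V, h (a + 1) = h a) {n : ℕ}
    (hn : 1 ≤ n) :
    ∑ a ∈ Icc 2 n, h a / (a * (a - 1)) + h (n + 1) / n ≤
      (∑ a ∈ Icc 2 n, if a ∈ V then h a / #{u ∈ V | u < a} else 0) +
        h (n + 1) / #{u ∈ V | u < n + 1} := by
  have hstep (a : ℕ) (ha : a ∈ V) : h (a + 1) / a ≤ h (a + 1) / #{u ∈ V | u < a + 1} := by
    have hle := card_filter_lt_le_sub_one hV (a + 1)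
    have hpos : 0 < #{u ∈ V | u < a + 1} :=
      card_pos.mpr ⟨a, mem_filter.mpr ⟨ha, Nat.lt_succ_self a⟩⟩
    have := hnonneg (a + 1)
    gcongr
    exact hle
  induction n, hn using Nat.le_induction with
  | base =>
    rw [Icc_eq_empty (by decide), sum_empty, sum_empty, zero_add, zero_add]
    by_cases hmem : 1 ∈ V
    · exact hstep 1 hmem
    · rw [hconst 1 hmem, hone, zero_div, zero_div]
  | succ n hn ih =>
    have hn₀ : (n : ℝ) ≠ 0 := mod_cast (Nat.one_le_iff_ne_zero.mp hn)
    have htelescope : h (n + 1) / ((n + 1 : ℕ) * ((n + 1 : ℕ) - 1)) =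
        h (n + 1) / n - h (n + 1) / (n + 1 : ℕ) := by
      rw [Nat.cast_succ, add_sub_cancel_right]
      field_simp
      rw [add_sub_cancel_left, mul_one]
    rw [sum_Icc_succ_top (Nat.add_le_add_right hn 1), htelescope,
      sum_Icc_succ_top (Nat.add_le_add_right hn 1)]
    by_cases hmem : n + 1 ∈ V
    · have hnew : 0 ≤ h (n + 1) / (n + 1 : ℕ) := div_nonneg (hnonneg _) (Nat.cast_nonneg _)
      rw [if_pos hmem]
      linarith [hstep _ hmem]
    · have hcard : {v ∈ V | v < n + 1 + 1} = {v ∈ V | v < n + 1} :=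
        filter_congr fun v hv ↦ by
          have := ne_of_mem_of_not_mem hv hmem
          omega
      rw [if_neg hmem, hcard, hconst _ hmem]
      linarith

theorem sum_ite_mem_le_sum {α M : Type*} [DecidableEq α] [AddCommMonoid M] [PartialOrder M]
    [IsOrderedAddMonoid M] (s : Finset α) {t u : Finset α} (htu : t ⊆ u) {h : α → M}
    (hnonneg : ∀ a, 0 ≤ h a) :
    (∑ a ∈ s, if a ∈ t then h a else 0) ≤ ∑ a ∈ u, h a := by
  rw [sum_ite_mem]
  exact sum_le_sum_of_subset_of_nonneg (inter_subset_right.trans htu) fun a _ _ ↦ hnonneg a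

namespace PossibleForest

variable {β : ℝ} (S : PossibleForest)

theorem cS_succ_of_notMem_V {a : ℕ} (ha : a ∉ S.V) : S.cS (a + 1) = S.cS a := by
  refine congrArg card (filter_congr fun e he ↦ ?_)
  have h₁ := ne_of_mem_of_not_mem (fst_mem_V he) ha
  have h₂ := ne_of_mem_of_not_mem (snd_mem_V he) ha
  omega

theorem cS_one : S.cS 1 = 0 := by
  rw [cS, card_eq_zero, filter_eq_empty_iff]
  exact fun e he h ↦ (S.one_le e he).not_gt h.2

variable {S}

theorem cS_eq_zero_of_forall_lt {t : ℕ} (ht : ∀ i ∈ S.V, i < t) : S.cS t = 0 := by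
  rw [cS, card_eq_zero, filter_eq_empty_iff]
  exact fun e he h ↦ (ht _ (fst_mem_V he)).not_ge h.1

theorem one_le_cS_of_mem_Vplus {a : ℕ} (ha : a ∈ S.Vplus) : 1 ≤ S.cS a := by
  obtain ⟨j, hj⟩ := mem_Vplus_iff.mp ha
  exact card_pos.mpr ⟨(a, j), mem_filter.mpr ⟨hj, le_rfl, S.snd_lt_fst _ hj⟩⟩

theorem card_filter_lt_pos_of_mem_Vplus {a : ℕ} (ha : a ∈ S.Vplus) : 0 < #{u ∈ S.V | u < a} := by
  obtain ⟨j, hj⟩ := mem_Vplus_iff.mp ha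
  exact card_pos.mpr ⟨j, mem_filter.mpr ⟨snd_mem_V hj, S.snd_lt_fst _ hj⟩⟩

theorem sum_cS_sq_div_le {t : ℕ} (ht : ∀ i ∈ S.V, i ≤ t) :
    ∑ a ∈ Icc 2 t, (S.cS a : ℝ) ^ 2 / (a * (a - 1)) ≤
      ∑ v ∈ S.V, (S.cS v : ℝ) ^ 2 / #{u ∈ S.V | u < v} := by
  obtain rfl | ht₀ := Nat.eq_zero_or_pos t
  · rw [Icc_eq_empty (by decide), sum_empty]
    positivity
  · have htop : S.cS (t + 1) = 0 := cS_eq_zero_of_forall_lt fun i hi ↦ Nat.lt_succ_of_le (ht i hi)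
    have hgap := sum_div_mul_sub_one_add_le (fun _ ↦ one_le_of_mem_V)
      (h := fun a ↦ (S.cS a : ℝ) ^ 2) (fun a ↦ sq_nonneg _) (by simp [cS_one])
      (fun a ha ↦ by rw [S.cS_succ_of_notMem_V ha]) ht₀
    simp only [htop, Nat.cast_zero, zero_pow two_ne_zero, zero_div, add_zero] at hgap
    exact hgap.trans (sum_ite_mem_le_sum _ Subset.rfl fun a ↦ by positivity)

variable (S)

/-- The share of the time step `a` in the product of the edge weights of the closed form: the
factor `(i / j) ^ (1 / (2 + β))` of an edge `(v_i, v_j)` is spread over the steps `a` with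
`j < a ≤ i`, and `c_S(a)` counts the edges with `a` in that range. -/
noncomputable def edgeFactor (β : ℝ) (a : ℕ) : ℝ :=
  (if a ∈ S.Vplus then 1 / ((2 + β) * a) else 1) *
    (((a : ℝ) / (a - 1)) ^ (1 / (2 + β))) ^ S.cS a

theorem edgeFactor_pos (hβ : 0 < β) {a : ℕ} (ha : 2 ≤ a) : 0 < S.edgeFactor β a := by
  have ha₁ : (0 : ℝ) < a - 1 := sub_pos.mpr (mod_cast ha)
  have : (0 : ℝ) < a := by linarith
  unfold edgeFactor
  split_ifs <;> positivity

variable {S}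

theorem prod_E_fst {t : ℕ} (ht : ∀ i ∈ S.V, i ≤ t) (w : ℕ → ℝ) :
    ∏ e ∈ S.E, w e.1 = ∏ a ∈ Icc 2 t, if a ∈ S.Vplus then w a else 1 := by
  have hinj : Set.InjOn Prod.fst (S.E : Set (ℕ × ℕ)) := fun e he e' he' h ↦
    S.outdeg_le_one e he e' he' h
  have hVplus : S.Vplus ⊆ Icc 2 t := fun a ha ↦ by
    obtain ⟨j, hj⟩ := mem_Vplus_iff.mp ha
    exact mem_Icc.mpr ⟨two_le_fst hj, ht _ (fst_mem_V hj)⟩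
  rw [prod_ite_mem, inter_eq_right.mpr hVplus, Vplus, prod_image hinj]

theorem prod_prod_Ioc_eq_prod_pow_cS {t : ℕ} (ht : ∀ i ∈ S.V, i ≤ t) (w : ℕ → ℝ) :
    ∏ e ∈ S.E, ∏ a ∈ Ioc e.2 e.1, w a = ∏ a ∈ Icc 2 t, w a ^ S.cS a := by
  have hIoc : ∀ e ∈ S.E, Ioc e.2 e.1 = {a ∈ Icc 2 t | a ≤ e.1 ∧ e.2 < a} := fun e he ↦ by
    have := ht _ (fst_mem_V he)
    have := S.one_le e he
    ext a
    simp only [mem_Ioc, mem_filter, mem_Icc]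
    omega
  calc ∏ e ∈ S.E, ∏ a ∈ Ioc e.2 e.1, w a
    _ = ∏ e ∈ S.E, ∏ a ∈ Icc 2 t, if a ≤ e.1 ∧ e.2 < a then w a else 1 :=
      prod_congr rfl fun e he ↦ by rw [hIoc e he, prod_filter]
    _ = ∏ a ∈ Icc 2 t, w a ^ S.cS a := by
      rw [prod_comm]
      exact prod_congr rfl fun a _ ↦ by rw [← prod_filter, prod_const, cS]

theorem prod_E_eq_prod_edgeFactor (hβ : 0 < β) {t : ℕ} (ht : ∀ i ∈ S.V, i ≤ t) :
    ∏ e ∈ S.E, 1 / ((2 + β) * ((e.1 : ℝ) ^ (1 + β) * e.2) ^ (1 / (2 + β))) =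
      ∏ a ∈ Icc 2 t, S.edgeFactor β a := by
  have hedge : ∀ e ∈ S.E, 1 / ((2 + β) * ((e.1 : ℝ) ^ (1 + β) * e.2) ^ (1 / (2 + β))) =
      1 / ((2 + β) * e.1) * ∏ a ∈ Ioc e.2 e.1, ((a : ℝ) / (a - 1)) ^ (1 / (2 + β)) := by
    intro e he
    have hj := S.one_le e he
    have hij := (S.snd_lt_fst e he).le
    have hnonneg : ∀ a ∈ Ioc e.2 e.1, (0 : ℝ) ≤ (a : ℝ) / (a - 1) := fun a ha ↦
      div_nonneg (Nat.cast_nonneg a)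
        (sub_nonneg.mpr (mod_cast hj.trans (mem_Ioc.mp ha).1.le))
    rw [one_div_mul_rpow_eq hβ (mod_cast hj.trans hij) (mod_cast hj),
      Real.finsetProd_rpow _ _ hnonneg, prod_Ioc_div_sub_one hj hij]
  rw [prod_congr rfl hedge, prod_mul_distrib, prod_E_fst ht fun a ↦ 1 / ((2 + β) * a),
    prod_prod_Ioc_eq_prod_pow_cS ht, ← prod_mul_distrib]
  rfl

variable (S)

/-- The logarithmic error made at the time step `a` when its contribution to the probability is
replaced by its share in the closed form. -/
noncomputable def logError (β : ℝ) (a : ℕ) : ℝ :=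
  Real.log (S.stepFactor β a / S.edgeFactor β a)

variable {S}

theorem prod_stepFactor_eq (hβ : 0 < β) (t : ℕ) :
    ∏ a ∈ Icc 2 t, S.stepFactor β a =
      (∏ a ∈ Icc 2 t, S.edgeFactor β a) * Real.exp (∑ a ∈ Icc 2 t, S.logError β a) :=
  prod_eq_prod_mul_exp_sum_log_div (fun _ ha ↦ S.stepFactor_pos hβ (mem_Icc.mp ha).1)
    fun _ ha ↦ S.edgeFactor_pos hβ (mem_Icc.mp ha).1

theorem logError_eq_sub {a : ℕ} (hβ : 0 < β) (ha : 2 ≤ a) :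
    S.logError β a =
      Real.log (if a ∈ S.Vplus then 1 + (4 + β) / moriTotalWeight β a
        else 1 + S.cS a / moriTotalWeight β a) -
      S.cS a / (2 + β) * Real.log (a / (a - 1)) := by
  have hW := moriTotalWeight_pos hβ ha
  have ha₁ : (0 : ℝ) < a - 1 := sub_pos.mpr (mod_cast ha)
  have : (0 : ℝ) < a := by linarith
  have hpow : Real.log ((((a : ℝ) / (a - 1)) ^ (1 / (2 + β))) ^ S.cS a) =
      S.cS a / (2 + β) * Real.log (a / (a - 1)) := by
    rw [Real.log_pow, Real.log_rpow (by positivity)]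
    ring
  rw [← hpow, ← Real.log_div (by split_ifs <;> positivity) (by positivity), logError, stepFactor,
    edgeFactor]
  congr 1
  split_ifs
  · have : 1 + (4 + β) / moriTotalWeight β a = (2 + β) * a / moriTotalWeight β a := by
      field_simp
      unfold moriTotalWeight
      ring
    rw [this]
    field_simp
  · rw [one_mul]

theorem abs_logError_le_of_mem_Vplus (hβ : 0 < β) {a : ℕ} (ha : a ∈ S.Vplus) :
    |S.logError β a| ≤ (4 + β) / β * (S.cS a ^ 2 / #{u ∈ S.V | u < a}) := by
  obtain ⟨j, hj⟩ := mem_Vplus_iff.mp ha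
  have ha₂ : 2 ≤ a := two_le_fst hj
  have hpos := card_filter_lt_pos_of_mem_Vplus ha
  have hle : (#{u ∈ S.V | u < a} : ℝ) ≤ a - 1 := by
    rw [← Nat.cast_pred (by omega)]
    exact mod_cast card_filter_lt_le_sub_one (fun _ ↦ one_le_of_mem_V) a
  rw [logError_eq_sub hβ ha₂, if_pos ha]
  refine (abs_log_one_add_div_moriTotalWeight_sub_le hβ ha₂ (one_le_cS_of_mem_Vplus ha)).trans ?_
  gcongr

theorem abs_logError_le_of_notMem_Vplus (hβ : 0 < β) {a : ℕ} (ha₂ : 2 ≤ a) (ha : a ∉ S.Vplus) :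
    |S.logError β a| ≤ 2 * (1 + β) / β ^ 2 * (S.cS a ^ 2 / (a * (a - 1))) := by
  rw [logError_eq_sub hβ ha₂, if_neg ha]
  exact abs_log_one_add_natCast_div_moriTotalWeight_sub_le hβ _ ha₂

theorem abs_logError_le (hβ : 0 < β) {a : ℕ} (ha₂ : 2 ≤ a) :
    |S.logError β a| ≤
      (4 + β) / β * (if a ∈ S.Vplus then (S.cS a : ℝ) ^ 2 / #{u ∈ S.V | u < a} else 0) +
        2 * (1 + β) / β ^ 2 * (S.cS a ^ 2 / (a * (a - 1))) := by
  split_ifs with ha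
  · have : (0 : ℝ) < a - 1 := sub_pos.mpr (mod_cast ha₂)
    exact le_add_of_le_of_nonneg (abs_logError_le_of_mem_Vplus hβ ha) (by positivity)
  · rw [mul_zero, zero_add]
    exact abs_logError_le_of_notMem_Vplus hβ ha₂ ha

theorem abs_sum_logError_le (hβ : 0 < β) {t : ℕ} (ht : ∀ i ∈ S.V, i ≤ t) :
    |∑ a ∈ Icc 2 t, S.logError β a| ≤ ((4 + β) / β + 2 * (1 + β) / β ^ 2) *
      ∑ v ∈ S.V, (S.cS v : ℝ) ^ 2 / #{u ∈ S.V | u < v} := by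
  refine (abs_sum_le_sum_abs _ _).trans
    ((sum_le_sum fun a ha ↦ abs_logError_le hβ (mem_Icc.mp ha).1).trans ?_)
  rw [sum_add_distrib, ← mul_sum, ← mul_sum, add_mul]
  gcongr
  · exact sum_ite_mem_le_sum _ subset_union_left fun a ↦ by positivity
  · exact sum_cS_sq_div_le ht

end PossibleForest

/-- **Lemma 3.2.** For `β > 0` there is a constant `K > 0` depending only on `β` such that
for every possible forest `S` with vertices `v_{s_1} < … < v_{s_k}` and every `t ≥ s_k`,
`Pr(S ⊆ G^t_{1,β}) = β/(d^in_S(v_1)+β) · ∏_{v_i∈V^-} Γ(1+d^in_S(v_i)+β)/Γ(1+β)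
 · ∏_{(v_i,v_j)∈E(S)} 1/((2+β)(i^{1+β}j)^{1/(2+β)}) · e^θ`
with `|θ| ≤ K · Σ_{j=2}^{k} c_S(s_j)²/(j−1)`.  Here the `j`-th smallest vertex `s_j`
is `S.V.orderIsoOfFin rfl ⟨j-1, _⟩`, and the sum below runs over indices `j : Fin S.V.card`
with `1 ≤ j`, the index `j` corresponding to `s_{j+1}` with denominator `j`. -/
theorem subgraph_probability_closed_form (β : ℝ) (hβ : 0 < β) :
    ∃ K : ℝ, 0 < K ∧ ∀ S : PossibleForest, ∀ t : ℕ, (∀ i ∈ S.V, i ≤ t) →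
      ∃ θ : ℝ,
        (|θ| ≤ K * ∑ j : Fin S.V.card,
            (if 1 ≤ (j : ℕ) then
              ((S.cS ((S.V.orderIsoOfFin rfl j : ℕ)) : ℝ)) ^ 2 / ((j : ℕ) : ℝ)
            else 0)) ∧
        subProb β t S =
          β / ((S.din 1 : ℝ) + β)
            * (∏ i ∈ S.Vminus, Real.Gamma (1 + (S.din i : ℝ) + β) / Real.Gamma (1 + β))
            * (∏ e ∈ S.E, 1 / ((2 + β) * (((e.1 : ℝ) ^ (1 + β) * (e.2 : ℝ)) ^ (1 / (2 + β)))))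
            * Real.exp θ := by
  refine ⟨(4 + β) / β + 2 * (1 + β) / β ^ 2, by positivity, fun S t ht ↦
    ⟨∑ a ∈ Icc 2 t, S.logError β a, ?_, ?_⟩⟩
  · rw [sum_orderIsoOfFin_div S.V fun v ↦ (S.cS v : ℝ) ^ 2]
    exact S.abs_sum_logError_le hβ ht
  · rw [S.subProb_eq_prod_stepFactor hβ ht, PossibleForest.prod_stepFactor_eq hβ,
      PossibleForest.prod_E_eq_prod_edgeFactor hβ ht]
    ring
end

section
/- Let β > 0 and let m ≥ 1 be an integer. There exists K > 0 depending only on m and β such that for all integers n ≥ 1 and all 1 ≤ a < b < c ≤ n, the expected number of triangles of G^n_{m,β} on the vertices u_a, u_b, u_c satisfies E[m(a,b)·m(a,c)·m(b,c)] = (m(m−1)(1+β)²/(2+β)² + m(m−1)²(1+β)³/(2+β)³) · (a²·b^{2+β}·c^{2+2β})^{−1/(2+β)} · (1+θ) for some real θ with |θ| ≤ K/a. -/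
open Finset

/-!
Grow the tree one vertex at a time. The numbers of edges between the blocks `a < b < c`, together
with the attachment weights `∑ (d_t(v_i) + β)` of blocks `a` and `b`, form a Markov chain, and the
expectations of suitable monomials in them satisfy linear recursions. Between blocks the only
observables needed are multiplied at each step by `1 + 2 / S_t`, where `S_t = (2 + β) t - 2` is the
total weight, which gives the power `t ^ (2 / (2 + β))`. Inside a block there are only `m` steps,
each of which changes the leading order by an explicit increment. An edge from `b` to `a`, and then
edges from `c` to `a` and to `b`, each cost a factor `1 / S_t`; since `S_t` is of order at least
`a`, every approximation along the way has relative error `O(1 / a)`.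
-/

namespace Mori

open Asymptotics

/-! ### Uniform relative error -/

section RelApprox

variable {ι : Type*} {N : ι → ℕ} {F F' G G' H : ι → ℝ}

/-- `F = G * (1 + O(1 / N))`, uniformly over the whole index type: the filter is `⊤`, so one
constant works for every index. The error is measured against `G`, so `F` vanishes where `G` does;
this lets the number of triangles be exactly `0` when `m = 1`. -/
def RelApprox (N : ι → ℕ) (F G : ι → ℝ) : Prop :=
  (fun i => F i - G i) =O[⊤] fun i => G i / N i

lemma isBigO_div_natCast (N : ι → ℕ) (G : ι → ℝ) : (fun i => G i / N i) =O[⊤] G :=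
  isBigO_top.mpr ⟨1, fun i => by
    simpa [div_eq_mul_inv] using
      mul_le_of_le_one_right (abs_nonneg (G i)) (Nat.cast_inv_le_one (N i))⟩

namespace RelApprox

lemma of_abs_sub_le (K : ℝ) (h : ∀ i, |F i - G i| ≤ K * (|G i| / N i)) : RelApprox N F G :=
  isBigO_top.mpr ⟨K, fun i => by simpa using h i⟩

lemma of_eq (h : ∀ i, F i = G i) : RelApprox N F G :=
  of_abs_sub_le 0 fun i => by simp [h i]

lemma const (c : ℝ) : RelApprox N (fun _ => c) (fun _ => c) :=
  of_eq fun _ => rfl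

lemma isBigO (h : RelApprox N F G) : F =O[⊤] G := by
  simpa using (IsBigO.trans h (isBigO_div_natCast N G)).add (isBigO_refl G ⊤)

lemma trans (hFG : RelApprox N F G) (hGH : RelApprox N G H) : RelApprox N F H := by
  have hdiv : (fun i => G i / N i) =O[⊤] fun i => H i / N i := by
    simpa only [div_eq_mul_inv] using hGH.isBigO.mul (isBigO_refl (fun i => (N i : ℝ)⁻¹) ⊤)
  simpa [RelApprox] using (IsBigO.trans hFG hdiv).add hGH

lemma mul (h : RelApprox N F G) (h' : RelApprox N F' G') :
    RelApprox N (fun i => F i * F' i) (fun i => G i * G' i) := by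
  have hleft : (fun i => (F i - G i) * F' i) =O[⊤] fun i => G i * G' i / N i :=
    (IsBigO.mul h h'.isBigO).congr_right fun i => by ring
  have hright : (fun i => G i * (F' i - G' i)) =O[⊤] fun i => G i * G' i / N i :=
    ((isBigO_refl G ⊤).mul h').congr_right fun i => by ring
  exact (hleft.add hright).congr_left fun i => by ring

lemma const_mul (c : ℝ) (h : RelApprox N F G) :
    RelApprox N (fun i => c * F i) (fun i => c * G i) :=
  (const c).mul h

lemma add (hG : ∀ i, 0 ≤ G i) (hG' : ∀ i, 0 ≤ G' i) (h : RelApprox N F G)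
    (h' : RelApprox N F' G') : RelApprox N (fun i => F i + F' i) (fun i => G i + G' i) := by
  have hleft : (fun i => G i / N i) =O[⊤] fun i => (G i + G' i) / N i :=
    isBigO_of_le _ fun i => by
      rw [Real.norm_of_nonneg (div_nonneg (hG i) (N i).cast_nonneg),
        Real.norm_of_nonneg (div_nonneg (add_nonneg (hG i) (hG' i)) (N i).cast_nonneg)]
      gcongr
      exact le_add_of_nonneg_right (hG' i)
  have hright : (fun i => G' i / N i) =O[⊤] fun i => (G i + G' i) / N i :=
    isBigO_of_le _ fun i => by
      rw [Real.norm_of_nonneg (div_nonneg (hG' i) (N i).cast_nonneg),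
        Real.norm_of_nonneg (div_nonneg (add_nonneg (hG i) (hG' i)) (N i).cast_nonneg)]
      gcongr
      exact le_add_of_nonneg_left (hG i)
  exact ((IsBigO.trans h hleft).add (IsBigO.trans h' hright)).congr_left fun i => by ring

/-- A relative error `O(1 / N)` does not constrain the indices with `N i = 1`. -/
lemma of_eq_of_ne_one {c c' : ℝ} (hc : c ≠ 0) (hne : ∀ i, N i ≠ 1 → F i = c)
    (hone : ∀ i, N i = 1 → F i = c') : RelApprox N F (fun _ => c) := by
  refine of_abs_sub_le (|c' - c| / |c|) fun i => ?_
  by_cases hi : N i = 1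
  · rw [hone i hi, hi, Nat.cast_one, div_one, div_mul_cancel₀ _ (abs_ne_zero.mpr hc)]
  · rw [hne i hi, sub_self, abs_zero]
    positivity

lemma of_recursion {m : ℕ} {x u w : ℕ → ι → ℝ} {d : ℕ → ℝ} {B : ι → ℝ} (hB : ∀ i, 0 ≤ B i)
    (hd₀ : 0 ≤ d 0) (hd : Monotone d)
    (hx₀ : RelApprox N (x 0) fun i => d 0 * B i)
    (hx : ∀ j < m, ∀ i, x (j + 1) i = x j i * u j i + w j i)
    (hu : ∀ j < m, RelApprox N (u j) fun _ => 1)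
    (hw : ∀ j < m, RelApprox N (w j) fun i => (d (j + 1) - d j) * B i) :
    ∀ j ≤ m, RelApprox N (x j) fun i => d j * B i := by
  intro j hj
  induction j with
  | zero => exact hx₀
  | succ j ih =>
    have hdj : 0 ≤ d j := hd₀.trans (hd j.zero_le)
    have hinc : 0 ≤ d (j + 1) - d j := sub_nonneg.mpr (hd j.le_succ)
    have hsum := ((ih (by omega)).mul (hu j hj)).add
      (fun i => mul_nonneg (mul_nonneg hdj (hB i)) zero_le_one)
      (fun i => mul_nonneg hinc (hB i)) (hw j hj)
    exact (of_eq (hx j hj)).trans (hsum.trans (of_eq fun i => by ring))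

lemma exists_eq_mul_one_add (h : RelApprox N F G) :
    ∃ K : ℝ, 0 < K ∧ ∀ i, ∃ θ : ℝ, |θ| ≤ K / N i ∧ F i = G i * (1 + θ) := by
  obtain ⟨K, hK, hbound⟩ := IsBigO.exists_pos h
  rw [isBigOWith_top] at hbound
  refine ⟨K, hK, fun i => ?_⟩
  have hi : |F i - G i| ≤ K * (|G i| / N i) := by simpa using hbound i
  rcases eq_or_ne (G i) 0 with hG | hG
  · refine ⟨0, by rw [abs_zero]; positivity, ?_⟩
    simpa [hG] using hi
  · refine ⟨(F i - G i) / G i, ?_, by field_simp; ring⟩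
    rw [abs_div, div_le_iff₀ (abs_pos.mpr hG)]
    exact hi.trans_eq (by ring)

end RelApprox

end RelApprox

/-! ### Growing the random tree by one vertex -/

section ParentSeq

variable {N : ℕ}

lemma pval_le_self (f : ParentSeq N) (j : ℕ) : pval f j ≤ j := by
  unfold pval
  split_ifs with h
  · exact (f _).2.2.trans j.pred_le
  · exact j.zero_le

lemma pval_mem_Icc (f : ParentSeq N) {j : ℕ} (hj : j ∈ Icc 2 N) : pval f j ∈ Icc 1 (j - 1) := by
  rw [pval, dif_pos (mem_Icc.mp hj)]
  exact mem_Icc.mpr (f _).2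

/-- The parent sequence obtained from `f` when a new vertex `v_{N+1}` attaches to `v_i`. -/
def snoc (f : ParentSeq N) (i : Set.Icc 1 N) : ParentSeq (N + 1) := fun t =>
  if h : (t : ℕ) ≤ N then f ⟨t, t.2.1, h⟩
  else ⟨i, i.2.1, i.2.2.trans (Nat.le_sub_one_of_lt (not_le.mp h))⟩

/-- A parent sequence of length `N + 1` is one of length `N` together with the parent of the last
vertex. -/
def snocEquiv (hN : 1 ≤ N) : ParentSeq N × Set.Icc 1 N ≃ ParentSeq (N + 1) where
  toFun p := snoc p.1 p.2
  invFun f := (fun t => f ⟨t, t.2.1, t.2.2.trans N.le_succ⟩,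
    f ⟨N + 1, Nat.succ_le_succ hN, le_rfl⟩)
  left_inv p := by
    refine Prod.ext (funext fun t => ?_) (Subtype.ext ?_)
    · exact dif_pos t.2.2
    · simp [snoc]
  right_inv f := by
    funext ⟨t, ht⟩
    rcases ht.2.lt_or_eq with h | rfl
    · exact dif_pos (Nat.lt_succ_iff.mp h)
    · exact dif_neg (Nat.not_succ_le_self N)

lemma pval_snoc_of_le (f : ParentSeq N) (i : Set.Icc 1 N) {j : ℕ} (hj : j ≤ N) :
    pval (snoc f i) j = pval f j := by
  simp [pval, snoc, hj, hj.trans N.le_succ]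

lemma pval_snoc_last (f : ParentSeq N) (i : Set.Icc 1 N) : pval (snoc f i) (N + 1) = i := by
  have hN : 1 ≤ N := i.2.1.trans i.2.2
  simp [pval, snoc, hN]

lemma deg_snoc_of_le (f : ParentSeq N) (i : Set.Icc 1 N) {t : ℕ} (ht : t ≤ N) (k : ℕ) :
    deg (snoc f i) t k = deg f t k := by
  unfold deg
  congr 2
  exact filter_congr fun j hj => by rw [pval_snoc_of_le f i ((mem_Icc.mp hj).2.trans ht)]

lemma deg_snoc_last (f : ParentSeq N) (i : Set.Icc 1 N) (k : ℕ) :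
    deg (snoc f i) (N + 1) k = deg f N k + if (i : ℕ) = k then 1 else 0 := by
  have hN : 1 ≤ N := i.2.1.trans i.2.2
  rw [← deg_snoc_of_le f i le_rfl]
  simp only [deg, card_filter, sum_Icc_succ_top (Nat.succ_le_succ hN), pval_snoc_last]
  ring

lemma deg_of_le (f : ParentSeq N) {t k : ℕ} (htN : t ≤ N) (htk : t ≤ k) :
    deg f t k = if 2 ≤ k then 1 else 0 := by
  rw [deg, filter_false_of_mem, card_empty, zero_add]
  intro j hj
  have hjt := mem_Icc.mp hj
  have hpar := mem_Icc.mp (pval_mem_Icc f (mem_Icc.mpr ⟨hjt.1, hjt.2.trans htN⟩))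
  omega

/-- The normalising constant `(2+β)t - 2` of the attachment step at time `t`: the sum of
`d_t(v_i) + β` over the vertices `v_1, …, v_t`. -/
def totalWeight (β : ℝ) (t : ℕ) : ℝ := (2 + β) * t - 2

lemma sum_deg (f : ParentSeq N) : ∑ i ∈ Icc 1 N, deg f N i = 2 * (N - 1) := by
  have hchildren : #(Icc 2 N) = ∑ i ∈ Icc 1 N, #{j ∈ Icc 2 N | pval f j = i} :=
    card_eq_sum_card_fiberwise fun j hj => by
      have hpar := mem_Icc.mp (pval_mem_Icc f hj)
      have hjN := mem_Icc.mp hj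
      exact mem_Icc.mpr ⟨hpar.1, by omega⟩
  have hparents : #(Icc 2 N) = ∑ i ∈ Icc 1 N, if 2 ≤ i then 1 else 0 := by
    rw [← card_filter]
    congr 1
    ext i
    simp only [mem_Icc, mem_filter]
    omega
  simp only [deg, sum_add_distrib]
  rw [← hchildren, ← hparents, Nat.card_Icc]
  omega

lemma sum_deg_add (β : ℝ) (f : ParentSeq N) (hN : 1 ≤ N) :
    ∑ i ∈ Icc 1 N, ((deg f N i : ℝ) + β) = totalWeight β N := by
  rw [sum_add_distrib, ← Nat.cast_sum, sum_deg, sum_const, Nat.card_Icc, totalWeight]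
  push_cast [Nat.cast_sub hN]
  simp only [nsmul_eq_mul]
  ring

lemma mul_le_totalWeight {β : ℝ} {t : ℕ} (ht : 1 ≤ t) : β * t ≤ totalWeight β t := by
  have ht' : (1 : ℝ) ≤ t := by exact_mod_cast ht
  rw [totalWeight]
  linarith

lemma totalWeight_pos {β : ℝ} (hβ : 0 < β) {t : ℕ} (ht : 1 ≤ t) : 0 < totalWeight β t :=
  lt_of_lt_of_le (by positivity) (mul_le_totalWeight ht)

lemma moriP_snoc (β : ℝ) (f : ParentSeq N) (i : Set.Icc 1 N) :
    moriP β (snoc f i) = moriP β f * (((deg f N i : ℝ) + β) / totalWeight β N) := by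
  have hN : 1 ≤ N := i.2.1.trans i.2.2
  rw [moriP, prod_Icc_succ_top (Nat.succ_le_succ hN), moriP]
  congr 1
  · refine prod_congr rfl fun t ht => ?_
    have htN := (mem_Icc.mp ht).2
    rw [pval_snoc_of_le f i htN, deg_snoc_of_le f i ((t.sub_le 1).trans htN)]
  · rw [pval_snoc_last, Nat.add_sub_cancel, deg_snoc_of_le f i le_rfl, totalWeight]
    push_cast
    ring

lemma moriE_succ (β : ℝ) (hN : 1 ≤ N) (X : ParentSeq (N + 1) → ℝ) :
    moriE (N + 1) β X = moriE N β fun f =>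
      ∑ i : Set.Icc 1 N, ((deg f N i : ℝ) + β) / totalWeight β N * X (snoc f i) := by
  rw [moriE, ← (snocEquiv hN).sum_comp, Fintype.sum_prod_type]
  refine sum_congr rfl fun f _ => ?_
  rw [mul_sum]
  refine sum_congr rfl fun i _ => ?_
  change moriP β (snoc f i) * X (snoc f i) = _
  rw [moriP_snoc, mul_assoc]

lemma moriE_one {β : ℝ} (hβ : 0 < β) (hN : 1 ≤ N) : moriE N β (fun _ => 1) = 1 := by
  induction N, hN using Nat.le_induction with
  | base =>
    have : IsEmpty (Set.Icc 2 1) := by simp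
    have : Unique (ParentSeq 1) := Pi.uniqueOfIsEmpty _
    simp [moriE, moriP]
  | succ N hN ih =>
    rw [moriE_succ β hN]
    refine Eq.trans ?_ ih
    congr 1
    funext f
    simp only [mul_one]
    rw [sum_set_coe (Set.Icc 1 N) (f := fun i => ((deg f N i : ℝ) + β) / totalWeight β N),
      Set.toFinset_Icc, ← sum_div, sum_deg_add β f hN, div_self (totalWeight_pos hβ hN).ne']

end ParentSeq

/-! ### Blocks of vertices -/

section Blocks

variable {m t : ℕ}

lemma blk_mono (m : ℕ) : Monotone (blk m) := fun _ _ h =>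
  Nat.succ_le_succ (Nat.div_le_div_right (Nat.sub_le_sub_right h 1))

lemma lt_blk_iff (hm : 0 < m) (ht : 1 ≤ t) {a : ℕ} : a < blk m t ↔ a * m < t := by
  rw [blk, Nat.lt_succ_iff, Nat.le_div_iff_mul_le hm]
  omega

/-- The number of vertices of the tree once `j` vertices of block `k ≥ 1` are present. -/
def blockTime (m k j : ℕ) : ℕ := (k - 1) * m + j

lemma blockTime_self {k : ℕ} (hk : 1 ≤ k) : blockTime m k m = k * m := by
  rw [blockTime, ← Nat.succ_mul, Nat.succ_eq_add_one, Nat.sub_add_cancel hk]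

lemma blk_blockTime_add_one {k j : ℕ} (hk : 1 ≤ k) (hj : j < m) :
    blk m (blockTime m k j + 1) = k := by
  rw [blockTime, blk, Nat.add_sub_cancel, mul_comm, Nat.mul_add_div (by omega), Nat.div_eq_of_lt hj]
  omega

/-- The number of edges from a vertex of block `b` to a parent in block `a`. -/
def edgeCount (m b a : ℕ) (f : ParentSeq t) : ℕ :=
  #{j ∈ Icc 2 t | blk m j = b ∧ blk m (pval f j) = a}

/-- The attachment weight of block `a`: the sum of `d_t(v_i) + β` over its vertices `v_i`, `i ≤ t`.
Up to normalisation it is the probability that `v_{t+1}` attaches to block `a`. -/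
def blockWeight (β : ℝ) (m a : ℕ) (f : ParentSeq t) : ℝ :=
  ∑ i ∈ Icc 1 t with blk m i = a, ((deg f t i : ℝ) + β)

lemma edgeCount_snoc (m b a : ℕ) (f : ParentSeq t) (i : Set.Icc 1 t) :
    edgeCount m b a (snoc f i) =
      edgeCount m b a f + if blk m (t + 1) = b ∧ blk m i = a then 1 else 0 := by
  have ht : 1 ≤ t := i.2.1.trans i.2.2
  rw [edgeCount, card_filter, sum_Icc_succ_top (Nat.succ_le_succ ht), pval_snoc_last, edgeCount,
    card_filter]
  congr 1
  exact sum_congr rfl fun j hj => by rw [pval_snoc_of_le f i (mem_Icc.mp hj).2]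

lemma blockWeight_snoc (β : ℝ) (m a : ℕ) (f : ParentSeq t) (i : Set.Icc 1 t) :
    blockWeight β m a (snoc f i) = blockWeight β m a f + (if blk m i = a then 1 else 0) +
      if blk m (t + 1) = a then 1 + β else 0 := by
  have ht : 1 ≤ t := i.2.1.trans i.2.2
  have hnew : deg (snoc f i) (t + 1) (t + 1) = 1 := by
    rw [deg_of_le _ le_rfl le_rfl, if_pos (Nat.succ_le_succ ht)]
  have hparent : ∑ j ∈ Icc 1 t, (if (i : ℕ) = j then if blk m j = a then (1 : ℝ) else 0 else 0) =
      if blk m i = a then 1 else 0 := by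
    rw [sum_ite_eq, if_pos (mem_Icc.mpr i.2)]
  rw [blockWeight, sum_filter, sum_Icc_succ_top (Nat.succ_le_succ t.zero_le), hnew, Nat.cast_one,
    ← hparent, blockWeight, sum_filter, ← sum_add_distrib]
  congr 1
  refine sum_congr rfl fun j _ => ?_
  rw [deg_snoc_last]
  split_ifs <;> push_cast <;> ring

lemma edgeCount_eq_zero (hm : 0 < m) {b : ℕ} (hb : 1 ≤ b) (ht : t ≤ blockTime m b 0) (a : ℕ)
    (f : ParentSeq t) : edgeCount m b a f = 0 := by
  rw [edgeCount, card_eq_zero, filter_eq_empty_iff]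
  rintro j hj ⟨rfl, -⟩
  have hjt := mem_Icc.mp hj
  have hlt := (lt_blk_iff (a := blk m j - 1) hm (by omega : 1 ≤ j)).mp (by omega)
  exact absurd (hjt.2.trans ht) (not_le.mpr hlt)

lemma blockWeight_eq_zero (hm : 0 < m) (β : ℝ) {a : ℕ} (ha : 1 ≤ a) (ht : t ≤ blockTime m a 0)
    (f : ParentSeq t) : blockWeight β m a f = 0 := by
  rw [blockWeight, filter_false_of_mem, sum_empty]
  rintro i hi rfl
  have hit := mem_Icc.mp hi
  have hlt := (lt_blk_iff (a := blk m i - 1) hm hit.1).mp (by omega)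
  exact absurd (hit.2.trans ht) (not_le.mpr hlt)

lemma blockWeight_blockTime_one (hm : 0 < m) (β : ℝ) {a : ℕ} (ha : 1 ≤ a)
    (f : ParentSeq (blockTime m a 1)) :
    blockWeight β m a f = (if a = 1 then 0 else 1) + β := by
  have hblock : {i ∈ Icc 1 (blockTime m a 1) | blk m i = a} = {blockTime m a 1} := by
    ext i
    simp only [mem_filter, mem_Icc, mem_singleton]
    constructor
    · rintro ⟨hi, rfl⟩
      exact le_antisymm hi.2 ((lt_blk_iff (a := blk m i - 1) hm hi.1).mp (by omega))
    · rintro rfl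
      exact ⟨⟨Nat.le_add_left 1 _, le_rfl⟩, blk_blockTime_add_one ha hm⟩
  have hroot : 2 ≤ blockTime m a 1 ↔ a ≠ 1 := by
    rw [blockTime, Nat.succ_le_succ_iff, Nat.one_le_iff_ne_zero, Nat.mul_ne_zero_iff]
    omega
  rw [blockWeight, hblock, sum_singleton, deg_of_le f le_rfl le_rfl]
  simp [hroot, ite_not]

lemma le_blockTime (hm : 0 < m) {a k : ℕ} (hak : a < k) (j : ℕ) : a ≤ blockTime m k j :=
  (Nat.le_sub_one_of_lt hak).trans ((Nat.le_mul_of_pos_right _ hm).trans (Nat.le_add_right _ _))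

lemma le_blockTime_add_one (hm : 0 < m) (a j : ℕ) : a ≤ blockTime m a (j + 1) := by
  have := Nat.le_mul_of_pos_right (a - 1) hm
  rw [blockTime]
  omega

lemma mul_le_blockTime {a k : ℕ} (hak : a < k) (j : ℕ) : a * m ≤ blockTime m k j :=
  (Nat.mul_le_mul_right m (Nat.le_sub_one_of_lt hak)).trans (Nat.le_add_right _ _)

lemma blockTime_le_mul {k j : ℕ} (hk : 1 ≤ k) (hj : j ≤ m) : blockTime m k j ≤ k * m :=
  (Nat.add_le_add_left hj _).trans_eq (blockTime_self hk)

lemma mul_le_blockTime_add {k : ℕ} (hk : 1 ≤ k) (j : ℕ) : k * m ≤ blockTime m k j + m :=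
  (blockTime_self hk).symm.trans_le (Nat.add_le_add_right (Nat.le_add_right _ _) m)

lemma blk_add_one_ne {k l : ℕ} (hm : 0 < m) (hkl : k ≤ l) (ht : l * m ≤ t) :
    blk m (t + 1) ≠ k :=
  ((lt_blk_iff hm (Nat.le_add_left 1 t)).mpr
    (Nat.lt_succ_of_le ((Nat.mul_le_mul_right m hkl).trans ht))).ne'

lemma mult_eq_edgeCount {n a b : ℕ} (hab : a < b) (f : ParentSeq (n * m)) :
    mult n m f a b = edgeCount m b a f := by
  rw [mult, edgeCount]
  congr 1
  refine filter_congr fun j _ => or_iff_right ?_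
  rintro ⟨rfl, rfl⟩
  exact hab.not_ge (blk_mono m (pval_le_self f j))

end Blocks

/-! ### The Markov chain of a triple of blocks -/

/-- Indices `1 ≤ a < b < c` of three blocks. -/
structure Triple where
  /-- the first block -/
  a : ℕ
  /-- the second block -/
  b : ℕ
  /-- the third block -/
  c : ℕ
  one_le_a : 1 ≤ a
  a_lt_b : a < b
  b_lt_c : b < c

namespace Triple

variable (τ : Triple)

lemma a_lt_c : τ.a < τ.c := τ.a_lt_b.trans τ.b_lt_c
lemma one_lt_b : 1 < τ.b := τ.one_le_a.trans_lt τ.a_lt_b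
lemma one_lt_c : 1 < τ.c := τ.one_lt_b.trans τ.b_lt_c

@[simp] lemma zero_ne_a : 0 ≠ τ.a := (Nat.zero_lt_of_lt τ.one_le_a).ne
@[simp] lemma zero_ne_b : 0 ≠ τ.b := (Nat.zero_lt_of_lt τ.a_lt_b).ne
@[simp] lemma a_ne_b : τ.a ≠ τ.b := τ.a_lt_b.ne
@[simp] lemma b_ne_a : τ.b ≠ τ.a := τ.a_lt_b.ne'
@[simp] lemma b_ne_c : τ.b ≠ τ.c := τ.b_lt_c.ne
@[simp] lemma c_ne_b : τ.c ≠ τ.b := τ.b_lt_c.ne'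
@[simp] lemma a_ne_c : τ.a ≠ τ.c := τ.a_lt_c.ne
@[simp] lemma c_ne_a : τ.c ≠ τ.a := τ.a_lt_c.ne'

end Triple

/-- The data of a partially grown tree relevant to the triangles on a triple of blocks: the numbers
of edges between them, and the attachment weights of the first two. Edge numbers are real so that
states can be fed to polynomial observables. -/
@[ext]
structure State where
  /-- the number of edges from the second block to the first -/
  ab : ℝ
  /-- the number of edges from the third block to the first -/
  ac : ℝ
  /-- the number of edges from the third block to the second -/
  bc : ℝ
  /-- the attachment weight of the first block -/
  wa : ℝ
  /-- the attachment weight of the second block -/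
  wb : ℝ

/-- The state after a vertex of block `k` has been attached to a vertex of block `l`. -/
def State.next (β : ℝ) (τ : Triple) (k l : ℕ) (s : State) : State where
  ab := s.ab + if k = τ.b ∧ l = τ.a then 1 else 0
  ac := s.ac + if k = τ.c ∧ l = τ.a then 1 else 0
  bc := s.bc + if k = τ.c ∧ l = τ.b then 1 else 0
  wa := s.wa + (if l = τ.a then 1 else 0) + if k = τ.a then 1 + β else 0
  wb := s.wb + (if l = τ.b then 1 else 0) + if k = τ.b then 1 + β else 0

/-- The state of the tree given by a parent sequence. -/
def stats (β : ℝ) (m : ℕ) (τ : Triple) {t : ℕ} (f : ParentSeq t) : State where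
  ab := edgeCount m τ.b τ.a f
  ac := edgeCount m τ.c τ.a f
  bc := edgeCount m τ.c τ.b f
  wa := blockWeight β m τ.a f
  wb := blockWeight β m τ.b f

lemma stats_snoc (β : ℝ) (m : ℕ) (τ : Triple) {t : ℕ} (f : ParentSeq t) (i : Set.Icc 1 t) :
    stats β m τ (snoc f i) = (stats β m τ f).next β τ (blk m (t + 1)) (blk m i) := by
  ext <;> simp [stats, State.next, edgeCount_snoc, blockWeight_snoc]

/-- The expectation of an observable `Φ` one step after the state `s`, when the next vertex belongs
to block `k` and the total attachment weight is `S`. Attaching outside the first two blocks is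
recorded as attaching to the nonexistent block `0`. -/
noncomputable def transition (β : ℝ) (τ : Triple) (S : ℝ) (k : ℕ) (Φ : State → ℝ) (s : State) : ℝ :=
  (s.wa * Φ (s.next β τ k τ.a) + s.wb * Φ (s.next β τ k τ.b) +
    (S - s.wa - s.wb) * Φ (s.next β τ k 0)) / S

lemma State.next_eq_next_zero (β : ℝ) (τ : Triple) (k : ℕ) {l : ℕ} (hla : l ≠ τ.a) (hlb : l ≠ τ.b)
    (s : State) : s.next β τ k l = s.next β τ k 0 := by
  ext <;> simp [State.next, hla, hlb]

lemma sum_mul_comp_eq {ι : Type*} (s : Finset ι) (w : ι → ℝ) (κ : ι → ℕ) (H : ℕ → ℝ) {a b : ℕ}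
    (hab : a ≠ b) {h : ℝ} (hH : ∀ l, l ≠ a → l ≠ b → H l = h) :
    ∑ i ∈ s, w i * H (κ i) = (∑ i ∈ s with κ i = a, w i) * H a + (∑ i ∈ s with κ i = b, w i) * H b +
      (∑ i ∈ s, w i - ∑ i ∈ s with κ i = a, w i - ∑ i ∈ s with κ i = b, w i) * h := by
  simp only [sum_filter, ← sum_sub_distrib, sum_mul, ← sum_add_distrib]
  refine sum_congr rfl fun i _ => ?_
  rcases eq_or_ne (κ i) a with hia | hia
  · simp [hia, hab]
  · rcases eq_or_ne (κ i) b with hib | hib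
    · simp [hib, hab.symm]
    · simp [hia, hib, hH _ hia hib]

lemma sum_weight_mul_snoc (β : ℝ) (m : ℕ) (τ : Triple) {t : ℕ} (ht : 1 ≤ t) (Φ : State → ℝ)
    (f : ParentSeq t) :
    ∑ i : Set.Icc 1 t, ((deg f t i : ℝ) + β) / totalWeight β t * Φ (stats β m τ (snoc f i)) =
      transition β τ (totalWeight β t) (blk m (t + 1)) Φ (stats β m τ f) := by
  set H : ℕ → ℝ := fun l => Φ ((stats β m τ f).next β τ (blk m (t + 1)) l)
  have hsplit := sum_mul_comp_eq (Icc 1 t) (fun i => (deg f t i : ℝ) + β) (blk m) H τ.a_lt_b.ne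
    (h := H 0) fun l hla hlb => congrArg Φ (State.next_eq_next_zero β τ _ hla hlb _)
  rw [sum_deg_add β f ht] at hsplit
  simp only [stats_snoc, div_mul_eq_mul_div, ← sum_div]
  rw [transition, sum_set_coe (Set.Icc 1 t) (f := fun i => ((deg f t i : ℝ) + β) * H (blk m i)),
    Set.toFinset_Icc, hsplit]
  rfl

/-- The expectation of an observable of the state at time `t`, as a linear functional. -/
noncomputable def expect (β : ℝ) (m : ℕ) (τ : Triple) (t : ℕ) : (State → ℝ) →ₗ[ℝ] ℝ where
  toFun Φ := moriE t β fun f => Φ (stats β m τ f)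
  map_add' Φ Ψ := by simp only [moriE, Pi.add_apply, mul_add, sum_add_distrib]
  map_smul' x Φ := by
    simp only [moriE, Pi.smul_apply, smul_eq_mul, RingHom.id_apply, mul_sum, mul_left_comm]

section Transition

variable (β : ℝ) (τ : Triple) (S : ℝ) (Φ : State → ℝ) (s : State)

lemma transition_a : transition β τ S τ.a Φ s =
    (s.wa * Φ { s with wa := s.wa + 1 + (1 + β) } +
      s.wb * Φ { s with wa := s.wa + (1 + β), wb := s.wb + 1 } +
      (S - s.wa - s.wb) * Φ { s with wa := s.wa + (1 + β) }) / S := by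
  simp [transition, State.next]

lemma transition_b : transition β τ S τ.b Φ s =
    (s.wa * Φ { s with ab := s.ab + 1, wa := s.wa + 1, wb := s.wb + (1 + β) } +
      s.wb * Φ { s with wb := s.wb + 1 + (1 + β) } +
      (S - s.wa - s.wb) * Φ { s with wb := s.wb + (1 + β) }) / S := by
  simp [transition, State.next]

lemma transition_c : transition β τ S τ.c Φ s =
    (s.wa * Φ { s with ac := s.ac + 1, wa := s.wa + 1 } +
      s.wb * Φ { s with bc := s.bc + 1, wb := s.wb + 1 } +
      (S - s.wa - s.wb) * Φ s) / S := by
  simp [transition, State.next]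

end Transition

section Recursion

variable {β : ℝ} {m t : ℕ} {τ : Triple}

lemma expect_eq_of_forall (hβ : 0 < β) (ht : 1 ≤ t) {Φ : State → ℝ} {r : ℝ}
    (h : ∀ f : ParentSeq t, Φ (stats β m τ f) = r) : expect β m τ t Φ = r := by
  have : expect β m τ t Φ = r * moriE t β fun _ => 1 := by
    simp only [expect, LinearMap.coe_mk, AddHom.coe_mk, moriE, h, mul_one, sum_mul, mul_comm r]
  rw [this, moriE_one hβ ht, mul_one]

lemma expect_one (hβ : 0 < β) (ht : 1 ≤ t) : expect β m τ t 1 = 1 :=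
  expect_eq_of_forall hβ ht fun _ => rfl

lemma expect_succ (ht : 1 ≤ t) (Φ : State → ℝ) :
    expect β m τ (t + 1) Φ =
      expect β m τ t (transition β τ (totalWeight β t) (blk m (t + 1)) Φ) := by
  simp only [expect, LinearMap.coe_mk, AddHom.coe_mk, moriE_succ β ht,
    sum_weight_mul_snoc β m τ ht]

open State

lemma expect_wa_succ_a (hβ : 0 < β) (ht : 1 ≤ t) (hk : blk m (t + 1) = τ.a) :
    expect β m τ (t + 1) wa =
      expect β m τ t wa * (1 + 1 / totalWeight β t) + (1 + β) := by
  have hS := (totalWeight_pos hβ ht).ne'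
  have hstep : transition β τ (totalWeight β t) τ.a wa =
      (1 + 1 / totalWeight β t) • wa + (1 + β) • 1 := by
    funext s
    simp only [transition_a, Pi.add_apply, Pi.smul_apply, Pi.one_apply, smul_eq_mul]
    field_simp
    ring
  rw [expect_succ ht, hk, hstep]
  simp only [map_add, map_smul, smul_eq_mul, expect_one hβ ht]
  ring

/- Under growth outside block `a` the rising factorial `wa * (wa + 1)`, unlike `wa ^ 2`, is an
eigenfunction; hence the choice of observables. -/
lemma expect_rising_succ_a (hβ : 0 < β) (ht : 1 ≤ t) (hk : blk m (t + 1) = τ.a) :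
    expect β m τ (t + 1) (wa * (wa + 1)) =
      expect β m τ t (wa * (wa + 1)) * (1 + 2 / totalWeight β t) +
        (expect β m τ t wa * (2 * (1 + β) * (1 + 1 / totalWeight β t)) +
          (1 + β) * (2 + β)) := by
  have hS := (totalWeight_pos hβ ht).ne'
  have hstep : transition β τ (totalWeight β t) τ.a (wa * (wa + 1)) =
      (1 + 2 / totalWeight β t) • (wa * (wa + 1)) +
        ((2 * (1 + β) * (1 + 1 / totalWeight β t)) • wa + ((1 + β) * (2 + β)) • 1) := by
    funext s
    simp only [transition_a, Pi.mul_apply, Pi.add_apply, Pi.smul_apply, Pi.one_apply, smul_eq_mul]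
    field_simp
    ring
  rw [expect_succ ht, hk, hstep]
  simp only [map_add, map_smul, smul_eq_mul, expect_one hβ ht]
  ring

lemma expect_rising_succ_of_ne (hβ : 0 < β) (ht : 1 ≤ t) (hka : blk m (t + 1) ≠ τ.a) :
    expect β m τ (t + 1) (wa * (wa + 1)) =
      expect β m τ t (wa * (wa + 1)) * (1 + 2 / totalWeight β t) := by
  have hS := (totalWeight_pos hβ ht).ne'
  have hstep : transition β τ (totalWeight β t) (blk m (t + 1)) (wa * (wa + 1)) =
      (1 + 2 / totalWeight β t) • (wa * (wa + 1)) := by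
    funext s
    simp only [hka, transition, next, Triple.a_ne_b, Triple.b_ne_a, Triple.zero_ne_a,
      Triple.zero_ne_b, and_true, and_false, if_true, if_false, add_zero, Pi.mul_apply,
      Pi.add_apply, Pi.one_apply, Pi.smul_apply, smul_eq_mul]
    field_simp
    ring
  rw [expect_succ ht, hstep, map_smul, smul_eq_mul, mul_comm]

lemma expect_ab_wa_succ_b (hβ : 0 < β) (ht : 1 ≤ t) (hk : blk m (t + 1) = τ.b) :
    expect β m τ (t + 1) (ab * wa) =
      expect β m τ t (ab * wa) * (1 + 1 / totalWeight β t) +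
        expect β m τ t (wa * (wa + 1)) * (1 / totalWeight β t) := by
  have hS := (totalWeight_pos hβ ht).ne'
  have hstep : transition β τ (totalWeight β t) τ.b (ab * wa) =
      (1 + 1 / totalWeight β t) • (ab * wa) +
        (1 / totalWeight β t) • (wa * (wa + 1)) := by
    funext s
    simp only [transition_b, Pi.mul_apply, Pi.add_apply, Pi.smul_apply, Pi.one_apply, smul_eq_mul]
    field_simp
    ring
  rw [expect_succ ht, hk, hstep]
  simp only [map_add, map_smul, smul_eq_mul]
  ring

lemma expect_rising_wb_succ_b (hβ : 0 < β) (ht : 1 ≤ t) (hk : blk m (t + 1) = τ.b) :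
    expect β m τ (t + 1) (wa * (wa + 1) * wb) =
      expect β m τ t (wa * (wa + 1) * wb) * (1 + 3 / totalWeight β t) +
        expect β m τ t (wa * (wa + 1)) * ((1 + β) * (1 + 2 / totalWeight β t)) := by
  have hS := (totalWeight_pos hβ ht).ne'
  have hstep : transition β τ (totalWeight β t) τ.b (wa * (wa + 1) * wb) =
      (1 + 3 / totalWeight β t) • (wa * (wa + 1) * wb) +
        ((1 + β) * (1 + 2 / totalWeight β t)) • (wa * (wa + 1)) := by
    funext s
    simp only [transition_b, Pi.mul_apply, Pi.add_apply, Pi.smul_apply, Pi.one_apply, smul_eq_mul]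
    field_simp
    ring
  rw [expect_succ ht, hk, hstep]
  simp only [map_add, map_smul, smul_eq_mul]
  ring

lemma expect_ab_wa_wb_succ_b (hβ : 0 < β) (ht : 1 ≤ t) (hk : blk m (t + 1) = τ.b) :
    expect β m τ (t + 1) (ab * wa * wb) =
      expect β m τ t (ab * wa * wb) * (1 + 2 / totalWeight β t) +
        (expect β m τ t (ab * wa) * ((1 + β) * (1 + 1 / totalWeight β t)) +
          expect β m τ t (wa * (wa + 1) * wb) * (1 / totalWeight β t) +
          expect β m τ t (wa * (wa + 1)) * ((1 + β) * (1 / totalWeight β t))) := by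
  have hS := (totalWeight_pos hβ ht).ne'
  have hstep : transition β τ (totalWeight β t) τ.b (ab * wa * wb) =
      (1 + 2 / totalWeight β t) • (ab * wa * wb) +
        (((1 + β) * (1 + 1 / totalWeight β t)) • (ab * wa) +
          (1 / totalWeight β t) • (wa * (wa + 1) * wb) +
          ((1 + β) * (1 / totalWeight β t)) • (wa * (wa + 1))) := by
    funext s
    simp only [transition_b, Pi.mul_apply, Pi.add_apply, Pi.smul_apply, Pi.one_apply, smul_eq_mul]
    field_simp
    ring
  rw [expect_succ ht, hk, hstep]
  simp only [map_add, map_smul, smul_eq_mul]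
  ring

lemma expect_ab_wa_wb_succ_of_ne (hβ : 0 < β) (ht : 1 ≤ t) (hka : blk m (t + 1) ≠ τ.a)
    (hkb : blk m (t + 1) ≠ τ.b) :
    expect β m τ (t + 1) (ab * wa * wb) =
      expect β m τ t (ab * wa * wb) * (1 + 2 / totalWeight β t) := by
  have hS := (totalWeight_pos hβ ht).ne'
  have hstep : transition β τ (totalWeight β t) (blk m (t + 1)) (ab * wa * wb) =
      (1 + 2 / totalWeight β t) • (ab * wa * wb) := by
    funext s
    simp only [hka, hkb, transition, next, Triple.a_ne_b, Triple.b_ne_a, Triple.zero_ne_a,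
      Triple.zero_ne_b, and_true, and_self, and_false, if_true, if_false, add_zero, Pi.mul_apply,
      Pi.smul_apply, smul_eq_mul]
    field_simp
    ring
  rw [expect_succ ht, hstep, map_smul, smul_eq_mul, mul_comm]

lemma expect_ab_ac_wb_succ_c (hβ : 0 < β) (ht : 1 ≤ t) (hk : blk m (t + 1) = τ.c) :
    expect β m τ (t + 1) (ab * ac * wb) =
      expect β m τ t (ab * ac * wb) * (1 + 1 / totalWeight β t) +
        expect β m τ t (ab * wa * wb) * (1 / totalWeight β t) := by
  have hS := (totalWeight_pos hβ ht).ne'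
  have hstep : transition β τ (totalWeight β t) τ.c (ab * ac * wb) =
      (1 + 1 / totalWeight β t) • (ab * ac * wb) + (1 / totalWeight β t) • (ab * wa * wb) := by
    funext s
    simp only [transition_c, Pi.mul_apply, Pi.add_apply, Pi.smul_apply, smul_eq_mul]
    field_simp
    ring
  rw [expect_succ ht, hk, hstep]
  simp only [map_add, map_smul, smul_eq_mul]
  ring

lemma expect_ab_bc_wa_succ_c (hβ : 0 < β) (ht : 1 ≤ t) (hk : blk m (t + 1) = τ.c) :
    expect β m τ (t + 1) (ab * bc * wa) =
      expect β m τ t (ab * bc * wa) * (1 + 1 / totalWeight β t) +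
        expect β m τ t (ab * wa * wb) * (1 / totalWeight β t) := by
  have hS := (totalWeight_pos hβ ht).ne'
  have hstep : transition β τ (totalWeight β t) τ.c (ab * bc * wa) =
      (1 + 1 / totalWeight β t) • (ab * bc * wa) + (1 / totalWeight β t) • (ab * wa * wb) := by
    funext s
    simp only [transition_c, Pi.mul_apply, Pi.add_apply, Pi.smul_apply, smul_eq_mul]
    field_simp
    ring
  rw [expect_succ ht, hk, hstep]
  simp only [map_add, map_smul, smul_eq_mul]
  ring

lemma expect_ab_ac_bc_succ_c (hβ : 0 < β) (ht : 1 ≤ t) (hk : blk m (t + 1) = τ.c) :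
    expect β m τ (t + 1) (ab * ac * bc) =
      expect β m τ t (ab * ac * bc) + (expect β m τ t (ab * ac * wb) * (1 / totalWeight β t) +
        expect β m τ t (ab * bc * wa) * (1 / totalWeight β t)) := by
  have hS := (totalWeight_pos hβ ht).ne'
  have hstep : transition β τ (totalWeight β t) τ.c (ab * ac * bc) =
      ab * ac * bc +
        ((1 / totalWeight β t) • (ab * ac * wb) + (1 / totalWeight β t) • (ab * bc * wa)) := by
    funext s
    simp only [transition_c, Pi.mul_apply, Pi.add_apply, Pi.smul_apply, smul_eq_mul]
    field_simp
    ring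
  rw [expect_succ ht, hk, hstep]
  simp only [map_add, map_smul, smul_eq_mul]
  ring

lemma expect_ab_ac_bc_succ_of_ne (hβ : 0 < β) (ht : 1 ≤ t) (hkb : blk m (t + 1) ≠ τ.b)
    (hkc : blk m (t + 1) ≠ τ.c) :
    expect β m τ (t + 1) (ab * ac * bc) =
      expect β m τ t (ab * ac * bc) := by
  have hS := (totalWeight_pos hβ ht).ne'
  have hstep : transition β τ (totalWeight β t) (blk m (t + 1)) (ab * ac * bc) =
      ab * ac * bc := by
    funext s
    simp only [hkb, hkc, transition, next, Triple.a_ne_b, Triple.b_ne_a, Triple.zero_ne_a,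
      Triple.zero_ne_b, and_true, and_self, if_true, if_false, add_zero, Pi.mul_apply]
    field_simp
    ring
  rw [expect_succ ht, hstep]

end Recursion

/-! ### Asymptotics of the growth factors -/

section Growth

lemma rpow_div_le_prod {y : ℝ} (hy₀ : 0 ≤ y) (hy₁ : y < 1) {p q : ℕ} (hp : 1 ≤ p) (hpq : p ≤ q) :
    ((q : ℝ) / p) ^ y ≤ ∏ t ∈ Ico p q, ((t : ℝ) / (t - y)) := by
  induction q, hpq using Nat.le_induction with
  | base => simp [show (p : ℝ) ≠ 0 by positivity]
  | succ q hpq ih =>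
    have hq : (1 : ℝ) ≤ q := by exact_mod_cast hp.trans hpq
    have hqy : 0 < (q : ℝ) - y := by linarith
    have hstep : (((q + 1 : ℕ) : ℝ) / q) ^ y ≤ q / (q - y) :=
      calc (((q + 1 : ℕ) : ℝ) / q) ^ y = (1 + 1 / (q : ℝ)) ^ y := by
            congr 1; push_cast; field_simp
        _ ≤ 1 + y * (1 / q) := rpow_one_add_le_one_add_mul_self
            (by linarith [show 0 ≤ 1 / (q : ℝ) by positivity]) hy₀ hy₁.le
        _ ≤ q / (q - y) := by
            rw [le_div_iff₀ hqy]
            field_simp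
            nlinarith
    rw [prod_Ico_succ_top hpq]
    calc (((q + 1 : ℕ) : ℝ) / p) ^ y = ((q : ℝ) / p) ^ y * (((q + 1 : ℕ) : ℝ) / q) ^ y := by
          rw [← Real.mul_rpow (by positivity) (by positivity)]
          congr 1
          field_simp
      _ ≤ _ := mul_le_mul ih hstep (by positivity) (le_trans (by positivity) ih)

lemma prod_mul_le_rpow_div_mul {y : ℝ} (hy₀ : 0 ≤ y) (hy₁ : y < 1) {p q : ℕ} (hp : 1 ≤ p)
    (hpq : p ≤ q) :
    (∏ t ∈ Ico p q, ((t : ℝ) / (t - y))) * (q / (q - y)) ≤ ((q : ℝ) / p) ^ y * (p / (p - y)) := by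
  induction q, hpq using Nat.le_induction with
  | base => simp [show (p : ℝ) ≠ 0 by positivity]
  | succ q hpq ih =>
    have hq : (1 : ℝ) ≤ q := by exact_mod_cast hp.trans hpq
    have hq1y : 0 < ((q + 1 : ℕ) : ℝ) - y := by push_cast; linarith
    have hp1 : (1 : ℝ) ≤ p := by exact_mod_cast hp
    have hpy : 0 < (p : ℝ) - y := by linarith
    have hstep : ((q + 1 : ℕ) : ℝ) / ((q + 1 : ℕ) - y) ≤ (((q + 1 : ℕ) : ℝ) / q) ^ y := by
      rw [← inv_div, ← inv_div (q : ℝ), Real.inv_rpow (by positivity)]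
      refine inv_anti₀ (by positivity) ?_
      calc ((q : ℝ) / (q + 1 : ℕ)) ^ y = (1 + -(1 / ((q + 1 : ℕ) : ℝ))) ^ y := by
            congr 1; push_cast; field_simp; ring
        _ ≤ 1 + y * -(1 / ((q + 1 : ℕ) : ℝ)) := rpow_one_add_le_one_add_mul_self
            (neg_le_neg (by rw [div_le_one (by positivity)]; push_cast; linarith)) hy₀ hy₁.le
        _ = ((q + 1 : ℕ) - y) / ((q + 1 : ℕ) : ℝ) := by field_simp; ring
    rw [prod_Ico_succ_top hpq]
    calc _ ≤ (((q : ℝ) / p) ^ y * (p / (p - y))) * (((q + 1 : ℕ) : ℝ) / q) ^ y := by gcongr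
      _ = (((q : ℝ) / p) ^ y * (((q + 1 : ℕ) : ℝ) / q) ^ y) * (p / (p - y)) := by ring
      _ = _ := by
          rw [← Real.mul_rpow (by positivity) (by positivity)]
          congr 2
          field_simp

lemma abs_prod_sub_rpow_div_le {y : ℝ} (hy₀ : 0 ≤ y) (hy₁ : y < 1) {p q : ℕ} (hp : 1 ≤ p)
    (hpq : p ≤ q) :
    |∏ t ∈ Ico p q, ((t : ℝ) / (t - y)) - ((q : ℝ) / p) ^ y| ≤
      y / (1 - y) * (((q : ℝ) / p) ^ y / p) := by
  have hp1 : (1 : ℝ) ≤ p := by exact_mod_cast hp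
  have hpq' : (p : ℝ) ≤ q := by exact_mod_cast hpq
  have hpy : 0 < (p : ℝ) - y := by linarith
  have hqy : 0 < (q : ℝ) - y := by linarith
  have hlower := rpow_div_le_prod hy₀ hy₁ hp hpq
  have hupper : ∏ t ∈ Ico p q, ((t : ℝ) / (t - y)) ≤ ((q : ℝ) / p) ^ y * (p / (p - y)) := by
    refine le_trans (le_mul_of_one_le_right ?_ ?_) (prod_mul_le_rpow_div_mul hy₀ hy₁ hp hpq)
    · exact le_trans (by positivity) hlower
    · rw [one_le_div hqy]
      linarith
  have herror : (p : ℝ) / (p - y) - 1 ≤ y / (1 - y) * (1 / p) := by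
    rw [div_sub_one hpy.ne', sub_sub_cancel, div_mul_div_comm, mul_one]
    have : 0 < 1 - y := by linarith
    gcongr
    nlinarith
  rw [abs_of_nonneg (sub_nonneg.mpr hlower)]
  calc _ ≤ ((q : ℝ) / p) ^ y * (p / (p - y)) - ((q : ℝ) / p) ^ y := by gcongr
    _ = ((q : ℝ) / p) ^ y * (p / (p - y) - 1) := by ring
    _ ≤ ((q : ℝ) / p) ^ y * (y / (1 - y) * (1 / p)) := by gcongr
    _ = _ := by ring

variable {ι : Type*} {N : ι → ℕ} {β : ℝ} {m : ℕ}

lemma relApprox_one_add_div_totalWeight (hβ : 0 < β) {t : ι → ℕ} (hN : ∀ i, 1 ≤ N i)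
    (ht : ∀ i, N i ≤ t i) (x : ℝ) :
    RelApprox N (fun i => 1 + x / totalWeight β (t i)) fun _ => 1 := by
  refine RelApprox.of_abs_sub_le (|x| / β) fun i => ?_
  have hNi : (0 : ℝ) < N i := by exact_mod_cast hN i
  have hweight : β * N i ≤ totalWeight β (t i) :=
    le_trans (by gcongr; exact ht i) (mul_le_totalWeight ((hN i).trans (ht i)))
  have hpos := totalWeight_pos hβ ((hN i).trans (ht i))
  calc |1 + x / totalWeight β (t i) - 1| = |x| / totalWeight β (t i) := by
        rw [add_sub_cancel_left, abs_div, abs_of_pos hpos]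
    _ ≤ |x| / (β * N i) := by gcongr
    _ = |x| / β * (|1| / N i) := by rw [abs_one]; field_simp

lemma relApprox_one_div_totalWeight (hβ : 0 < β) {t s : ι → ℕ} (hN : ∀ i, 1 ≤ N i)
    (ht : ∀ i, N i ≤ t i) (hts : ∀ i, t i ≤ s i) (hst : ∀ i, s i ≤ t i + m) :
    RelApprox N (fun i => 1 / totalWeight β (t i)) fun i => 1 / ((2 + β) * s i) := by
  refine RelApprox.of_abs_sub_le (((2 + β) * m + 2) / β) fun i => ?_
  have hNi : (0 : ℝ) < N i := by exact_mod_cast hN i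
  have hsi : (0 : ℝ) < s i := by exact_mod_cast (hN i).trans ((ht i).trans (hts i))
  have hts' : (t i : ℝ) ≤ s i := by exact_mod_cast hts i
  have hst' : (s i : ℝ) ≤ t i + m := by exact_mod_cast hst i
  have hweight : β * N i ≤ totalWeight β (t i) :=
    le_trans (by gcongr; exact ht i) (mul_le_totalWeight ((hN i).trans (ht i)))
  have hpos := totalWeight_pos hβ ((hN i).trans (ht i))
  have hdiff : 1 / totalWeight β (t i) - 1 / ((2 + β) * s i) =
      ((2 + β) * (s i - t i) + 2) / totalWeight β (t i) * (1 / ((2 + β) * s i)) := by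
    field_simp
    rw [totalWeight]
    ring
  have : 0 ≤ (s i : ℝ) - t i := sub_nonneg.mpr hts'
  rw [hdiff, abs_of_nonneg (by positivity), abs_of_nonneg (by positivity)]
  calc _ ≤ ((2 + β) * m + 2) / (β * N i) * (1 / ((2 + β) * s i)) := by
        gcongr
        linarith
    _ = _ := by field_simp

lemma relApprox_rpow {t s : ι → ℕ} {y : ℝ} (hy₀ : 0 ≤ y) (hy₁ : y ≤ 1) (hN : ∀ i, 1 ≤ N i)
    (ht : ∀ i, N i ≤ t i) (hts : ∀ i, t i ≤ s i) (hst : ∀ i, s i ≤ t i + m) :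
    RelApprox N (fun i => (t i : ℝ) ^ y) fun i => (s i : ℝ) ^ y := by
  refine RelApprox.of_abs_sub_le m fun i => ?_
  have hNi : (0 : ℝ) < N i := by exact_mod_cast hN i
  have hNs : (N i : ℝ) ≤ s i := by exact_mod_cast (ht i).trans (hts i)
  have hsi : (0 : ℝ) < s i := hNi.trans_le hNs
  have hst' : (s i : ℝ) ≤ t i + m := by exact_mod_cast hst i
  have hratio : (t i : ℝ) / s i ≤ 1 := by
    rw [div_le_one hsi]
    exact_mod_cast hts i
  have hpow : (t i : ℝ) / s i ≤ ((t i : ℝ) / s i) ^ y :=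
    Real.self_le_rpow_of_le_one (by positivity) hratio hy₁
  have hpow₁ : ((t i : ℝ) / s i) ^ y ≤ 1 := Real.rpow_le_one (by positivity) hratio hy₀
  have hgap : 1 - (t i : ℝ) / s i ≤ m / N i := by
    rw [one_sub_div hsi.ne']
    gcongr
    linarith
  have hsplit : (t i : ℝ) ^ y = (s i : ℝ) ^ y * ((t i : ℝ) / s i) ^ y := by
    rw [← Real.mul_rpow hsi.le (by positivity), mul_div_cancel₀ _ hsi.ne']
  have hs_pow : 0 ≤ (s i : ℝ) ^ y := by positivity
  rw [abs_of_nonneg hs_pow, abs_sub_comm, abs_of_nonneg (by rw [hsplit]; nlinarith), hsplit]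
  calc _ = (s i : ℝ) ^ y * (1 - ((t i : ℝ) / s i) ^ y) := by ring
    _ ≤ (s i : ℝ) ^ y * (m / N i) := by gcongr; linarith
    _ = _ := by ring

/-- The exponent in the growth `t ^ (2 / (2 + β))` of the observables multiplied by
`1 + 2 / totalWeight β t` at each step. -/
noncomputable def growthExponent (β : ℝ) : ℝ := 2 / (2 + β)

lemma growthExponent_nonneg (hβ : 0 < β) : 0 ≤ growthExponent β := by
  rw [growthExponent]
  positivity

lemma growthExponent_lt_one (hβ : 0 < β) : growthExponent β < 1 := by
  rw [growthExponent, div_lt_one (by positivity)]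
  linarith

lemma one_add_two_div_totalWeight (hβ : 0 < β) {t : ℕ} (ht : 1 ≤ t) :
    1 + 2 / totalWeight β t = t / (t - growthExponent β) := by
  have hpos := totalWeight_pos hβ ht
  have hy : (2 + β) * growthExponent β = 2 := mul_div_cancel₀ 2 (by positivity)
  have hweight : totalWeight β t = (2 + β) * (t - growthExponent β) := by
    rw [totalWeight, mul_sub, hy]
  have hsub : (t : ℝ) - growthExponent β ≠ 0 := fun h => by simp [hweight, h] at hpos
  rw [one_add_div hpos.ne', div_eq_div_iff hpos.ne' hsub, hweight]
  linear_combination -(t - growthExponent β) * hy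

lemma eq_mul_prod_Ico {x u : ℕ → ℝ} {p q : ℕ} (hpq : p ≤ q)
    (hx : ∀ t, p ≤ t → t < q → x (t + 1) = x t * u t) : x q = x p * ∏ t ∈ Ico p q, u t := by
  induction q, hpq using Nat.le_induction with
  | base => simp
  | succ q hpq ih =>
    rw [hx q hpq q.lt_succ_self, ih fun t hpt htq => hx t hpt (htq.trans q.lt_succ_self),
      prod_Ico_succ_top hpq, mul_assoc]

lemma relApprox_of_growth (hβ : 0 < β) {p q s : ι → ℕ} {x : ℕ → ι → ℝ} (hN : ∀ i, 1 ≤ N i)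
    (hp : ∀ i, N i ≤ p i) (hpq : ∀ i, p i ≤ q i) (hqs : ∀ i, q i ≤ s i) (hsq : ∀ i, s i ≤ q i + m)
    (hx : ∀ i t, p i ≤ t → t < q i → x (t + 1) i = x t i * (1 + 2 / totalWeight β t)) :
    RelApprox N (fun i => x (q i) i) fun i => x (p i) i * ((s i : ℝ) / p i) ^ growthExponent β := by
  set y := growthExponent β
  have hy₀ : 0 ≤ y := growthExponent_nonneg hβ
  have hy₁ : y < 1 := growthExponent_lt_one hβ
  have hprod : ∀ i, x (q i) i = x (p i) i * ∏ t ∈ Ico (p i) (q i), ((t : ℝ) / (t - y)) := fun i =>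
    eq_mul_prod_Ico (x := fun t => x t i) (hpq i) fun t hpt htq => by
      rw [hx i t hpt htq, one_add_two_div_totalWeight hβ ((hN i).trans ((hp i).trans hpt))]
  have hgrowth : RelApprox N (fun i => ∏ t ∈ Ico (p i) (q i), ((t : ℝ) / (t - y)))
      fun i => ((q i : ℝ) / p i) ^ y := by
    refine RelApprox.of_abs_sub_le (y / (1 - y)) fun i => ?_
    have hNi : (0 : ℝ) < N i := by exact_mod_cast hN i
    have : 0 ≤ y / (1 - y) := div_nonneg hy₀ (by linarith)
    refine (abs_prod_sub_rpow_div_le hy₀ hy₁ ((hN i).trans (hp i)) (hpq i)).trans ?_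
    rw [abs_of_nonneg (by positivity)]
    gcongr
    exact hp i
  have hround : RelApprox N (fun i => ((q i : ℝ) / p i) ^ y) fun i => ((s i : ℝ) / p i) ^ y := by
    simp only [Real.div_rpow (Nat.cast_nonneg _) (Nat.cast_nonneg _)]
    simp only [div_eq_mul_inv]
    exact (relApprox_rpow hy₀ hy₁.le hN (fun i => (hp i).trans (hpq i)) hqs hsq).mul
      (RelApprox.of_eq fun _ => rfl)
  exact (RelApprox.of_eq hprod).trans
    ((RelApprox.of_eq fun _ => rfl).mul (hgrowth.trans hround))

end Growth

/-! ### Expected observables along the three blocks -/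

section Phases

open State

variable {β : ℝ} {m : ℕ}

/-- The leading order of `1 / totalWeight β t` while block `k` is being added. -/
noncomputable def edgeRate (β : ℝ) (m k : ℕ) : ℝ := 1 / ((2 + β) * (k * m : ℕ))

lemma edgeRate_nonneg (hβ : 0 < β) (m k : ℕ) : 0 ≤ edgeRate β m k := by
  rw [edgeRate]
  positivity

lemma relApprox_one_add_div_block (hβ : 0 < β) (hm : 0 < m) {k : Triple → ℕ}
    (hk : ∀ τ, τ.a < k τ) (j : ℕ) (x : ℝ) :
    RelApprox Triple.a (fun τ => 1 + x / totalWeight β (blockTime m (k τ) j)) fun _ => 1 :=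
  relApprox_one_add_div_totalWeight hβ Triple.one_le_a (fun τ => le_blockTime hm (hk τ) j) x

lemma relApprox_one_div_block (hβ : 0 < β) (hm : 0 < m) {k : Triple → ℕ}
    (hk : ∀ τ, τ.a < k τ) {j : ℕ} (hj : j ≤ m) :
    RelApprox Triple.a (fun τ => 1 / totalWeight β (blockTime m (k τ) j))
      fun τ => edgeRate β m (k τ) :=
  relApprox_one_div_totalWeight hβ Triple.one_le_a (fun τ => le_blockTime hm (hk τ) j)
    (fun τ => blockTime_le_mul (τ.one_le_a.trans (hk τ).le) hj)
    (fun τ => mul_le_blockTime_add (τ.one_le_a.trans (hk τ).le) j)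

lemma relApprox_block_of_growth (hβ : 0 < β) (hm : 0 < m) {l k : Triple → ℕ}
    (hl : ∀ τ, τ.a ≤ l τ) (hlk : ∀ τ, l τ < k τ) {j : ℕ} (hj : j ≤ m) {x : ℕ → Triple → ℝ}
    (hx : ∀ τ t, l τ * m ≤ t → t < blockTime m (k τ) j →
      x (t + 1) τ = x t τ * (1 + 2 / totalWeight β t)) :
    RelApprox Triple.a (fun τ => x (blockTime m (k τ) j) τ)
      fun τ => x (l τ * m) τ * ((k τ : ℝ) / l τ) ^ growthExponent β := by
  have hk : ∀ τ, 1 ≤ k τ := fun τ => Nat.one_le_of_lt (hlk τ)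
  refine (relApprox_of_growth (m := m) hβ Triple.one_le_a
    (fun τ => (hl τ).trans (Nat.le_mul_of_pos_right _ hm)) (fun τ => mul_le_blockTime (hlk τ) j)
    (fun τ => blockTime_le_mul (hk τ) hj) (fun τ => mul_le_blockTime_add (hk τ) j) hx).trans
    (RelApprox.of_eq fun τ => ?_)
  have hm' : (m : ℝ) ≠ 0 := by positivity
  rw [Nat.cast_mul, Nat.cast_mul, mul_div_mul_right _ _ hm']

lemma relApprox_wa_a (hβ : 0 < β) (hm : 0 < m) {j : ℕ} (hj : j < m) :
    RelApprox Triple.a (fun τ => expect β m τ (blockTime m τ.a (j + 1)) wa)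
      fun _ => (j + 1) * (1 + β) := by
  have htime : ∀ (τ : Triple) (j), τ.a ≤ blockTime m τ.a (j + 1) :=
    fun τ j => le_blockTime_add_one hm τ.a j
  have hbase : RelApprox Triple.a (fun τ => expect β m τ (blockTime m τ.a 1) wa)
      fun _ => 1 + β := by
    refine RelApprox.of_eq_of_ne_one (c' := β) (by positivity) (fun τ hτ => ?_) fun τ hτ => ?_
    all_goals
      refine expect_eq_of_forall hβ (τ.one_le_a.trans (htime τ 0)) fun f => ?_
      exact (blockWeight_blockTime_one hm β τ.one_le_a f).trans (by simp [hτ])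
  have hrec := RelApprox.of_recursion (N := Triple.a) (m := m - 1)
    (x := fun j τ => expect β m τ (blockTime m τ.a (j + 1)) wa)
    (d := fun j => ((j : ℝ) + 1) * (1 + β)) (B := fun _ => 1)
    (fun _ => zero_le_one) (by positivity)
    (monotone_nat_of_le_succ fun j => by gcongr; simp)
    (by simpa using hbase)
    (fun j hj τ => expect_wa_succ_a hβ (τ.one_le_a.trans (htime τ j))
      (blk_blockTime_add_one (j := j + 1) τ.one_le_a (by omega)))
    (fun j _ => relApprox_one_add_div_totalWeight hβ Triple.one_le_a (htime · j) 1)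
    (fun j _ => RelApprox.of_eq fun _ => by push_cast; ring)
  simpa using hrec j (by omega)

lemma relApprox_rising_a (hβ : 0 < β) (hm : 0 < m) {j : ℕ} (hj : j < m) :
    RelApprox Triple.a (fun τ => expect β m τ (blockTime m τ.a (j + 1)) (wa * (wa + 1)))
      fun _ => (j + 1) * (1 + β) * ((j + 1) * (1 + β) + 1) := by
  have htime : ∀ (τ : Triple) (j), τ.a ≤ blockTime m τ.a (j + 1) :=
    fun τ j => le_blockTime_add_one hm τ.a j
  have hbase : RelApprox Triple.a (fun τ => expect β m τ (blockTime m τ.a 1) (wa * (wa + 1)))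
      fun _ => (1 + β) * (1 + β + 1) := by
    refine RelApprox.of_eq_of_ne_one (c' := β * (β + 1)) (by positivity) (fun τ hτ => ?_)
      fun τ hτ => ?_
    all_goals
      refine expect_eq_of_forall hβ (τ.one_le_a.trans (htime τ 0)) fun f => ?_
      have hwa : (stats β m τ f).wa = (if τ.a = 1 then 0 else 1) + β :=
        blockWeight_blockTime_one hm β τ.one_le_a f
      simp [hwa, hτ]
  have hinc : ∀ j < m - 1, RelApprox Triple.a
      (fun τ => expect β m τ (blockTime m τ.a (j + 1)) wa *
        (2 * (1 + β) * (1 + 1 / totalWeight β (blockTime m τ.a (j + 1)))) + (1 + β) * (2 + β))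
      fun _ => (j + 1) * (1 + β) * (2 * (1 + β) * 1) + (1 + β) * (2 + β) := fun j hj =>
    ((relApprox_wa_a hβ hm (by omega)).mul
      ((relApprox_one_add_div_totalWeight hβ Triple.one_le_a (htime · j) 1).const_mul _)).add
      (fun _ => by positivity) (fun _ => by positivity) (RelApprox.const _)
  have hrec := RelApprox.of_recursion (N := Triple.a) (m := m - 1)
    (x := fun j τ => expect β m τ (blockTime m τ.a (j + 1)) (wa * (wa + 1)))
    (d := fun j => ((j : ℝ) + 1) * (1 + β) * ((j + 1) * (1 + β) + 1)) (B := fun _ => 1)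
    (fun _ => zero_le_one) (by positivity)
    (monotone_nat_of_le_succ fun j => by gcongr <;> simp)
    (by simpa using hbase)
    (fun j hj τ => expect_rising_succ_a hβ (τ.one_le_a.trans (htime τ j))
      (blk_blockTime_add_one (j := j + 1) τ.one_le_a (by omega)))
    (fun j _ => relApprox_one_add_div_totalWeight hβ Triple.one_le_a (htime · j) 2)
    (fun j hj => (hinc j hj).trans (RelApprox.of_eq fun _ => by push_cast; ring))
  simpa using hrec j (by omega)

/-- The leading order of the expectation of `wa * (wa + 1)` while block `b` is being added. -/
noncomputable def risingOrder (β : ℝ) (m : ℕ) (τ : Triple) : ℝ :=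
  m * (1 + β) * (m * (1 + β) + 1) * ((τ.b : ℝ) / τ.a) ^ growthExponent β

lemma risingOrder_nonneg (hβ : 0 < β) (m : ℕ) (τ : Triple) : 0 ≤ risingOrder β m τ := by
  rw [risingOrder]
  positivity

lemma relApprox_rising_b (hβ : 0 < β) (hm : 0 < m) {j : ℕ} (hj : j ≤ m) :
    RelApprox Triple.a (fun τ => expect β m τ (blockTime m τ.b j) (wa * (wa + 1)))
      (risingOrder β m) := by
  have hstart : RelApprox Triple.a (fun τ => expect β m τ (τ.a * m) (wa * (wa + 1)))
      fun _ => m * (1 + β) * (m * (1 + β) + 1) := by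
    obtain ⟨m, rfl⟩ := Nat.exists_eq_succ_of_ne_zero hm.ne'
    have h := relApprox_rising_a hβ hm m.lt_succ_self
    simpa [blockTime_self (Triple.one_le_a _)] using h
  have hgrowth := relApprox_block_of_growth hβ hm (fun τ => le_rfl) Triple.a_lt_b hj
    (x := fun t τ => expect β m τ t (wa * (wa + 1))) fun τ t ht _ =>
      expect_rising_succ_of_ne hβ
        (τ.one_le_a.trans ((Nat.le_mul_of_pos_right _ hm).trans ht)) (blk_add_one_ne hm le_rfl ht)
  exact hgrowth.trans (hstart.mul (RelApprox.of_eq fun _ => rfl))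

lemma relApprox_rising_wb_b (hβ : 0 < β) (hm : 0 < m) {j : ℕ} (hj : j ≤ m) :
    RelApprox Triple.a (fun τ => expect β m τ (blockTime m τ.b j) (wa * (wa + 1) * wb))
      fun τ => j * (1 + β) * risingOrder β m τ := by
  have htime : ∀ (τ : Triple) (j), 1 ≤ blockTime m τ.b j := fun τ => le_blockTime hm τ.one_lt_b
  refine RelApprox.of_recursion
    (x := fun j τ => expect β m τ (blockTime m τ.b j) (wa * (wa + 1) * wb))
    (d := fun j => (j : ℝ) * (1 + β)) (risingOrder_nonneg hβ m) (by simp)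
    (monotone_nat_of_le_succ fun j => by gcongr; simp)
    (RelApprox.of_eq fun τ => ?_)
    (fun j hj τ => expect_rising_wb_succ_b hβ (htime τ j) (blk_blockTime_add_one τ.one_lt_b.le hj))
    (fun j _ => relApprox_one_add_div_block hβ hm Triple.a_lt_b j 3)
    (fun j hj => ((relApprox_rising_b hβ hm hj.le).mul
      ((relApprox_one_add_div_block hβ hm Triple.a_lt_b j 2).const_mul _)).trans
      (RelApprox.of_eq fun τ => by push_cast; ring)) j hj
  rw [expect_eq_of_forall hβ (htime τ 0) (r := 0) fun f => by
    simp [stats, blockWeight_eq_zero hm β τ.one_lt_b.le le_rfl]]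
  simp

lemma relApprox_ab_wa_b (hβ : 0 < β) (hm : 0 < m) {j : ℕ} (hj : j ≤ m) :
    RelApprox Triple.a (fun τ => expect β m τ (blockTime m τ.b j) (ab * wa))
      fun τ => j * (risingOrder β m τ * edgeRate β m τ.b) := by
  have htime : ∀ (τ : Triple) (j), 1 ≤ blockTime m τ.b j := fun τ => le_blockTime hm τ.one_lt_b
  refine RelApprox.of_recursion
    (x := fun j τ => expect β m τ (blockTime m τ.b j) (ab * wa)) (d := fun j => (j : ℝ))
    (fun τ => mul_nonneg (risingOrder_nonneg hβ m τ) (edgeRate_nonneg hβ m τ.b)) (by simp)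
    Nat.mono_cast
    (RelApprox.of_eq fun τ => ?_)
    (fun j hj τ => expect_ab_wa_succ_b hβ (htime τ j) (blk_blockTime_add_one τ.one_lt_b.le hj))
    (fun j _ => relApprox_one_add_div_block hβ hm Triple.a_lt_b j 1)
    (fun j hj => ((relApprox_rising_b hβ hm hj.le).mul
      (relApprox_one_div_block hβ hm Triple.a_lt_b hj.le)).trans
      (RelApprox.of_eq fun τ => by push_cast; ring)) j hj
  rw [expect_eq_of_forall hβ (htime τ 0) (r := 0) fun f => by
    simp [stats, edgeCount_eq_zero hm τ.one_lt_b.le le_rfl]]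
  simp

lemma relApprox_ab_wa_wb_b (hβ : 0 < β) (hm : 0 < m) {j : ℕ} (hj : j ≤ m) :
    RelApprox Triple.a (fun τ => expect β m τ (blockTime m τ.b j) (ab * wa * wb))
      fun τ => (1 + β) * j ^ 2 * (risingOrder β m τ * edgeRate β m τ.b) := by
  have htime : ∀ (τ : Triple) (j), 1 ≤ blockTime m τ.b j := fun τ => le_blockTime hm τ.one_lt_b
  have hζ := risingOrder_nonneg hβ m
  have hσ := fun τ : Triple => edgeRate_nonneg hβ m τ.b
  have hinc : ∀ j < m, RelApprox Triple.a
      (fun τ => expect β m τ (blockTime m τ.b j) (ab * wa) *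
          ((1 + β) * (1 + 1 / totalWeight β (blockTime m τ.b j))) +
        expect β m τ (blockTime m τ.b j) (wa * (wa + 1) * wb) *
          (1 / totalWeight β (blockTime m τ.b j)) +
        expect β m τ (blockTime m τ.b j) (wa * (wa + 1)) *
          ((1 + β) * (1 / totalWeight β (blockTime m τ.b j))))
      fun τ => j * (risingOrder β m τ * edgeRate β m τ.b) * ((1 + β) * 1) +
        j * (1 + β) * risingOrder β m τ * edgeRate β m τ.b +
        risingOrder β m τ * ((1 + β) * edgeRate β m τ.b) := fun j hj => by
    have hone := relApprox_one_add_div_block hβ hm Triple.a_lt_b j 1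
    have hrate := relApprox_one_div_block hβ hm Triple.a_lt_b hj.le
    have hU := (relApprox_ab_wa_b hβ hm hj.le).mul (hone.const_mul (1 + β))
    have hV := (relApprox_rising_wb_b hβ hm hj.le).mul hrate
    have hZ := (relApprox_rising_b hβ hm hj.le).mul (hrate.const_mul (1 + β))
    refine (hU.add (fun τ => ?_) (fun τ => ?_) hV).add (fun τ => ?_) (fun τ => ?_) hZ
    all_goals
      have := hζ τ
      have := hσ τ
      positivity
  refine RelApprox.of_recursion
    (x := fun j τ => expect β m τ (blockTime m τ.b j) (ab * wa * wb))
    (d := fun j => (1 + β) * (j : ℝ) ^ 2) (fun τ => mul_nonneg (hζ τ) (hσ τ)) (by simp)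
    (monotone_nat_of_le_succ fun j => by gcongr; simp)
    (RelApprox.of_eq fun τ => ?_)
    (fun j hj τ => expect_ab_wa_wb_succ_b hβ (htime τ j) (blk_blockTime_add_one τ.one_lt_b.le hj))
    (fun j _ => relApprox_one_add_div_block hβ hm Triple.a_lt_b j 2)
    (fun j hj => (hinc j hj).trans (RelApprox.of_eq fun τ => by push_cast; ring)) j hj
  rw [expect_eq_of_forall hβ (htime τ 0) (r := 0) fun f => by
    simp [stats, edgeCount_eq_zero hm τ.one_lt_b.le le_rfl]]
  simp

/-- The leading order of the expectation of `ab * wa * wb` while block `c` is being added. -/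
noncomputable def pathOrder (β : ℝ) (m : ℕ) (τ : Triple) : ℝ :=
  (1 + β) * m ^ 2 * (risingOrder β m τ * edgeRate β m τ.b) *
    ((τ.c : ℝ) / τ.b) ^ growthExponent β

lemma pathOrder_nonneg (hβ : 0 < β) (m : ℕ) (τ : Triple) : 0 ≤ pathOrder β m τ := by
  have := risingOrder_nonneg hβ m τ
  have := edgeRate_nonneg hβ m τ.b
  rw [pathOrder]
  positivity

lemma relApprox_ab_wa_wb_c (hβ : 0 < β) (hm : 0 < m) {j : ℕ} (hj : j ≤ m) :
    RelApprox Triple.a (fun τ => expect β m τ (blockTime m τ.c j) (ab * wa * wb))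
      (pathOrder β m) := by
  have hstart := relApprox_ab_wa_wb_b hβ hm le_rfl
  simp only [blockTime_self (Triple.one_lt_b _).le] at hstart
  have hgrowth := relApprox_block_of_growth hβ hm (fun τ => τ.a_lt_b.le) Triple.b_lt_c hj
    (x := fun t τ => expect β m τ t (ab * wa * wb)) fun τ t ht _ =>
      expect_ab_wa_wb_succ_of_ne hβ (τ.one_lt_b.le.trans ((Nat.le_mul_of_pos_right _ hm).trans ht))
        (blk_add_one_ne hm τ.a_lt_b.le ht) (blk_add_one_ne hm le_rfl ht)
  exact hgrowth.trans (hstart.mul (RelApprox.of_eq fun _ => rfl))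

lemma relApprox_ab_ac_wb_c (hβ : 0 < β) (hm : 0 < m) {j : ℕ} (hj : j ≤ m) :
    RelApprox Triple.a (fun τ => expect β m τ (blockTime m τ.c j) (ab * ac * wb))
      fun τ => j * (pathOrder β m τ * edgeRate β m τ.c) := by
  have htime : ∀ (τ : Triple) (j), 1 ≤ blockTime m τ.c j := fun τ => le_blockTime hm τ.one_lt_c
  refine RelApprox.of_recursion
    (x := fun j τ => expect β m τ (blockTime m τ.c j) (ab * ac * wb)) (d := fun j => (j : ℝ))
    (fun τ => mul_nonneg (pathOrder_nonneg hβ m τ) (edgeRate_nonneg hβ m τ.c)) (by simp)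
    Nat.mono_cast
    (RelApprox.of_eq fun τ => ?_)
    (fun j hj τ => expect_ab_ac_wb_succ_c hβ (htime τ j) (blk_blockTime_add_one τ.one_lt_c.le hj))
    (fun j _ => relApprox_one_add_div_block hβ hm Triple.a_lt_c j 1)
    (fun j hj => ((relApprox_ab_wa_wb_c hβ hm hj.le).mul
      (relApprox_one_div_block hβ hm Triple.a_lt_c hj.le)).trans
      (RelApprox.of_eq fun τ => by push_cast; ring)) j hj
  rw [expect_eq_of_forall hβ (htime τ 0) (r := 0) fun f => by
    simp [stats, edgeCount_eq_zero hm τ.one_lt_c.le le_rfl]]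
  simp

lemma relApprox_ab_bc_wa_c (hβ : 0 < β) (hm : 0 < m) {j : ℕ} (hj : j ≤ m) :
    RelApprox Triple.a (fun τ => expect β m τ (blockTime m τ.c j) (ab * bc * wa))
      fun τ => j * (pathOrder β m τ * edgeRate β m τ.c) := by
  have htime : ∀ (τ : Triple) (j), 1 ≤ blockTime m τ.c j := fun τ => le_blockTime hm τ.one_lt_c
  refine RelApprox.of_recursion
    (x := fun j τ => expect β m τ (blockTime m τ.c j) (ab * bc * wa)) (d := fun j => (j : ℝ))
    (fun τ => mul_nonneg (pathOrder_nonneg hβ m τ) (edgeRate_nonneg hβ m τ.c)) (by simp)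
    Nat.mono_cast
    (RelApprox.of_eq fun τ => ?_)
    (fun j hj τ => expect_ab_bc_wa_succ_c hβ (htime τ j) (blk_blockTime_add_one τ.one_lt_c.le hj))
    (fun j _ => relApprox_one_add_div_block hβ hm Triple.a_lt_c j 1)
    (fun j hj => ((relApprox_ab_wa_wb_c hβ hm hj.le).mul
      (relApprox_one_div_block hβ hm Triple.a_lt_c hj.le)).trans
      (RelApprox.of_eq fun τ => by push_cast; ring)) j hj
  rw [expect_eq_of_forall hβ (htime τ 0) (r := 0) fun f => by
    simp [stats, edgeCount_eq_zero hm τ.one_lt_c.le le_rfl]]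
  simp

lemma relApprox_ab_ac_bc_c (hβ : 0 < β) (hm : 0 < m) {j : ℕ} (hj : j ≤ m) :
    RelApprox Triple.a (fun τ => expect β m τ (blockTime m τ.c j) (ab * ac * bc))
      fun τ => j * (j - 1) * (pathOrder β m τ * edgeRate β m τ.c ^ 2) := by
  have htime : ∀ (τ : Triple) (j), 1 ≤ blockTime m τ.c j := fun τ => le_blockTime hm τ.one_lt_c
  have hπ := pathOrder_nonneg hβ m
  have hσ := fun τ : Triple => edgeRate_nonneg hβ m τ.c
  have hinc : ∀ j < m, RelApprox Triple.a
      (fun τ => expect β m τ (blockTime m τ.c j) (ab * ac * wb) *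
          (1 / totalWeight β (blockTime m τ.c j)) +
        expect β m τ (blockTime m τ.c j) (ab * bc * wa) *
          (1 / totalWeight β (blockTime m τ.c j)))
      fun τ => j * (pathOrder β m τ * edgeRate β m τ.c) * edgeRate β m τ.c +
        j * (pathOrder β m τ * edgeRate β m τ.c) * edgeRate β m τ.c := fun j hj => by
    have hrate := relApprox_one_div_block hβ hm Triple.a_lt_c hj.le
    have hnonneg : ∀ τ : Triple,
        0 ≤ j * (pathOrder β m τ * edgeRate β m τ.c) * edgeRate β m τ.c := fun τ => by
      have := hπ τ
      have := hσ τ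
      positivity
    exact ((relApprox_ab_ac_wb_c hβ hm hj.le).mul hrate).add hnonneg hnonneg
      ((relApprox_ab_bc_wa_c hβ hm hj.le).mul hrate)
  refine RelApprox.of_recursion
    (x := fun j τ => expect β m τ (blockTime m τ.c j) (ab * ac * bc)) (u := fun _ _ => 1)
    (d := fun j => (j : ℝ) * (j - 1)) (fun τ => mul_nonneg (hπ τ) (sq_nonneg _)) (by simp)
    (monotone_nat_of_le_succ fun j => by push_cast; linarith [j.cast_nonneg (α := ℝ)])
    (RelApprox.of_eq fun τ => ?_)
    (fun j hj τ => (expect_ab_ac_bc_succ_c hβ (htime τ j)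
      (blk_blockTime_add_one τ.one_lt_c.le hj)).trans (by rw [mul_one]))
    (fun j _ => RelApprox.const 1)
    (fun j hj => (hinc j hj).trans (RelApprox.of_eq fun τ => by push_cast; ring)) j hj
  rw [expect_eq_of_forall hβ (htime τ 0) (r := 0) fun f => by
    simp [stats, edgeCount_eq_zero hm τ.one_lt_c.le le_rfl]]
  simp

end Phases

/-! ### The number of triangles -/

section Triangles

open State

variable {β : ℝ} {m : ℕ}

lemma moriE_mult_mul_mult_mul_mult (β : ℝ) (m n : ℕ) (τ : Triple) :
    moriE (n * m) β (fun f =>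
        (mult n m f τ.a τ.b : ℝ) * (mult n m f τ.a τ.c : ℝ) * (mult n m f τ.b τ.c : ℝ)) =
      expect β m τ (n * m) (ab * ac * bc) := by
  simp only [mult_eq_edgeCount τ.a_lt_b, mult_eq_edgeCount τ.b_lt_c, mult_eq_edgeCount τ.a_lt_c]
  rfl

lemma expect_ab_ac_bc_eq_of_le (hβ : 0 < β) (hm : 0 < m) (τ : Triple) {t : ℕ} (ht : τ.c * m ≤ t) :
    expect β m τ t (ab * ac * bc) = expect β m τ (τ.c * m) (ab * ac * bc) := by
  induction t, ht using Nat.le_induction with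
  | base => rfl
  | succ t ht ih =>
    rw [expect_ab_ac_bc_succ_of_ne hβ ((Nat.mul_pos (Nat.zero_lt_of_lt τ.one_lt_c) hm).trans_le ht)
      (blk_add_one_ne hm τ.b_lt_c.le ht) (blk_add_one_ne hm le_rfl ht), ih]

lemma rpow_neg_one_div_two_add (hβ : 0 < β) (τ : Triple) :
    ((τ.a : ℝ) ^ 2 * (τ.b : ℝ) ^ (2 + β) * (τ.c : ℝ) ^ (2 + 2 * β)) ^ (-(1 / (2 + β))) =
      ((τ.c : ℝ) / τ.a) ^ growthExponent β / (τ.b * (τ.c : ℝ) ^ 2) := by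
  have ha : (0 : ℝ) < τ.a := Nat.cast_pos.mpr τ.one_le_a
  have hb : (0 : ℝ) < τ.b := ha.trans (Nat.cast_lt.mpr τ.a_lt_b)
  have hc : (0 : ℝ) < τ.c := hb.trans (Nat.cast_lt.mpr τ.b_lt_c)
  have hβ' : 2 + β ≠ 0 := by positivity
  have hexpa : (2 : ℕ) * -(1 / (2 + β)) = -growthExponent β := by
    rw [growthExponent]; push_cast; ring
  have hexpb : (2 + β) * -(1 / (2 + β)) = -1 := by field_simp
  have hexpc : (2 + 2 * β) * -(1 / (2 + β)) = growthExponent β - (2 : ℕ) := by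
    rw [growthExponent]; push_cast; field_simp; ring
  rw [Real.mul_rpow (by positivity) (by positivity), Real.mul_rpow (by positivity) (by positivity),
    ← Real.rpow_natCast, ← Real.rpow_mul ha.le, ← Real.rpow_mul hb.le, ← Real.rpow_mul hc.le,
    hexpa, hexpb, hexpc, Real.rpow_neg ha.le, Real.rpow_neg_one, Real.rpow_sub hc,
    Real.rpow_natCast, Real.div_rpow hc.le ha.le]
  field_simp

lemma pathOrder_mul_edgeRate_sq (hβ : 0 < β) (hm : 0 < m) (τ : Triple) :
    m * (m - 1) * (pathOrder β m τ * edgeRate β m τ.c ^ 2) =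
      (m * (m - 1) * (1 + β) ^ 2 / (2 + β) ^ 2 + m * (m - 1) ^ 2 * (1 + β) ^ 3 / (2 + β) ^ 3) *
        ((τ.a : ℝ) ^ 2 * (τ.b : ℝ) ^ (2 + β) * (τ.c : ℝ) ^ (2 + 2 * β)) ^ (-(1 / (2 + β))) := by
  have ha : (0 : ℝ) < τ.a := Nat.cast_pos.mpr τ.one_le_a
  have hb : (0 : ℝ) < τ.b := ha.trans (Nat.cast_lt.mpr τ.a_lt_b)
  have hc : (0 : ℝ) < τ.c := hb.trans (Nat.cast_lt.mpr τ.b_lt_c)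
  have : (0 : ℝ) < m := Nat.cast_pos.mpr hm
  have hgrowth : ((τ.b : ℝ) / τ.a) ^ growthExponent β * ((τ.c : ℝ) / τ.b) ^ growthExponent β =
      ((τ.c : ℝ) / τ.a) ^ growthExponent β := by
    rw [← Real.mul_rpow (by positivity) (by positivity), mul_comm, div_mul_div_cancel₀ hb.ne']
  rw [rpow_neg_one_div_two_add hβ, ← hgrowth, pathOrder, risingOrder, edgeRate, edgeRate]
  push_cast
  field_simp
  ring

end Triangles

end Mori

/-- Expected number of triangles of `G^n_{m,β}` on `u_a, u_b, u_c` (equation (4.3)). -/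
theorem expected_triangles_on_triple (β : ℝ) (hβ : 0 < β) (m : ℕ) (hm : 1 ≤ m) :
    ∃ K : ℝ, 0 < K ∧ ∀ n : ℕ, 1 ≤ n → ∀ a b c : ℕ, 1 ≤ a → a < b → b < c → c ≤ n →
      ∃ θ : ℝ, |θ| ≤ K / (a : ℝ) ∧
        moriE (n * m) β
            (fun f => (mult n m f a b : ℝ) * (mult n m f a c : ℝ) * (mult n m f b c : ℝ)) =
          ((m : ℝ) * ((m : ℝ) - 1) * (1 + β) ^ 2 / (2 + β) ^ 2
              + (m : ℝ) * ((m : ℝ) - 1) ^ 2 * (1 + β) ^ 3 / (2 + β) ^ 3)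
            * ((a : ℝ) ^ 2 * (b : ℝ) ^ (2 + β) * (c : ℝ) ^ (2 + 2 * β)) ^ (-(1 / (2 + β)))
            * (1 + θ) := by
  obtain ⟨K, hK, htri⟩ := (Mori.relApprox_ab_ac_bc_c hβ hm le_rfl).exists_eq_mul_one_add
  refine ⟨K, hK, fun n _ a b c ha hab hbc hcn => ?_⟩
  let τ : Mori.Triple := ⟨a, b, c, ha, hab, hbc⟩
  obtain ⟨θ, hθ, hexpect⟩ := htri τ
  rw [Mori.blockTime_self τ.one_lt_c.le, Mori.pathOrder_mul_edgeRate_sq hβ hm] at hexpect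
  exact ⟨θ, hθ, (Mori.moriE_mult_mul_mult_mul_mult β m n τ).trans
    ((Mori.expect_ab_ac_bc_eq_of_le hβ hm τ (Nat.mul_le_mul_right m hcn)).trans hexpect)⟩
end
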